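/- Let q > 2 and 0 < λ ≤ Λ, M > 0. There is a constant c₁ > 0 depending only on λ, Λ, M, n, and q such that for every embedded, regular C¹ curve u : ℝ/ℤ → ℝⁿ with ‖u'‖_{W^{1-1/q,q}} < ∞, λ ≤ |u'| ≤ Λ, and TP(u) ≤ M, and every C¹ map w : ℝ/ℤ → ℝⁿ with ‖w'‖_{W^{1-1/q,q}} < ∞, the first variation δTP(u)[w] = (d/dt) TP(u + t w) |_{t=0} exists and satisfies |δTP(u)[w]| ≤ c₁ · ‖u'‖_{W^{1-1/q,q}}^q · ‖w'‖_{W^{1-1/q,q}}. -/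

import Mathlib

open MeasureTheory Set Filter
open scoped RealInnerProductSpace ENNReal Topology

noncomputable section

/-- The distance on the circle `ℝ/ℤ` between the points represented by `x` and `y`. -/
def circDist (x y : ℝ) : ℝ := ‖((x - y : ℝ) : AddCircle (1 : ℝ))‖

/-- The representative of `z` modulo `1` lying in `(-1/2, 1/2]`. -/
def wrap (z : ℝ) : ℝ := 1 / 2 - Int.fract (1 / 2 - z)

/-- Squared wedge norm `|a ∧ b|² = |a|²|b|² - ⟨a,b⟩²`. -/
def wedgeSq {n : ℕ} (a b : EuclideanSpace ℝ (Fin n)) : ℝ :=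
  ‖a‖ ^ 2 * ‖b‖ ^ 2 - ⟪a, b⟫ ^ 2

/-- Wedge inner product `⟨a∧b, c∧d⟩ = ⟨a,c⟩⟨b,d⟩ - ⟨a,d⟩⟨b,c⟩`. -/
def wedgeInner {n : ℕ} (a b c d : EuclideanSpace ℝ (Fin n)) : ℝ :=
  ⟪a, c⟫ * ⟪b, d⟫ - ⟪a, d⟫ * ⟪b, c⟫

/-- Fundamental domain for double integrals over `(ℝ/ℤ)²`. -/
def unitSq : Set (ℝ × ℝ) := Ioc (0 : ℝ) 1 ×ˢ Ioc (0 : ℝ) 1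

/-- The tangent-point functional `TP` (extended-real-valued). -/
def TPe {n : ℕ} (q : ℝ) (u : ℝ → EuclideanSpace ℝ (Fin n)) : ℝ≥0∞ :=
  ENNReal.ofReal (1 / q) *
    ∫⁻ p in unitSq, ENNReal.ofReal
      (wedgeSq (deriv u p.2) (u p.1 - u p.2) ^ (q / 2) / ‖u p.1 - u p.2‖ ^ (2 * q))

/-- The tangent-point functional `TP` (real-valued). -/
def TPr {n : ℕ} (q : ℝ) (u : ℝ → EuclideanSpace ℝ (Fin n)) : ℝ := (TPe q u).toReal

/-- The `q`-th power of the Sobolev–Slobodeckii seminorm `[f]_{W^{s,q}}` on `ℝ/ℤ`. -/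
def sobSemPow {n : ℕ} (s q : ℝ) (f : ℝ → EuclideanSpace ℝ (Fin n)) : ℝ≥0∞ :=
  ∫⁻ p in unitSq, ENNReal.ofReal (‖f p.1 - f p.2‖ ^ q / circDist p.1 p.2 ^ (1 + s * q))

/-- The `W^{s,q}`-norm `‖f‖_{L^q} + [f]_{W^{s,q}}`. -/
def Wnorm {n : ℕ} (s q : ℝ) (f : ℝ → EuclideanSpace ℝ (Fin n)) : ℝ :=
  (∫ x in Ioc (0 : ℝ) 1, ‖f x‖ ^ q) ^ (1 / q) + (sobSemPow s q f).toReal ^ (1 / q)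

/-- The bi-Lipschitz constant `bil(u) = sup_{x ≢ y} |x-y|_{ℝ/ℤ}/|u(x)-u(y)|`. -/
def bil {n : ℕ} (u : ℝ → EuclideanSpace ℝ (Fin n)) : ℝ≥0∞ :=
  ⨆ (x : ℝ) (y : ℝ) (_ : circDist x y ≠ 0),
    ENNReal.ofReal (circDist x y) / ENNReal.ofReal ‖u x - u y‖

/-- The `L^∞`-norm of the derivative of `u`. -/
def linfD {n : ℕ} (u : ℝ → EuclideanSpace ℝ (Fin n)) : ℝ≥0∞ :=
  ⨆ x : ℝ, (‖deriv u x‖₊ : ℝ≥0∞)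

/-- A periodic curve is embedded if it is injective on the circle `ℝ/ℤ`. -/
def Embedded {n : ℕ} (u : ℝ → EuclideanSpace ℝ (Fin n)) : Prop :=
  ∀ x y : ℝ, u x = u y → ((x : AddCircle (1 : ℝ)) = (y : AddCircle (1 : ℝ)))

/-- A curve is regular if `min_{ℝ/ℤ} |u'| > 0`. -/
def Regular {n : ℕ} (u : ℝ → EuclideanSpace ℝ (Fin n)) : Prop :=
  0 < ⨅ x : ℝ, ‖deriv u x‖

/-- Orthogonal projection of `b` onto the orthogonal complement of `ℝ a`. -/
def projPerp {n : ℕ} (a b : EuclideanSpace ℝ (Fin n)) : EuclideanSpace ℝ (Fin n) :=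
  b - (⟪b, a⟫ / ‖a‖ ^ 2) • a

/-- The classical tangent-point functional (extended-real-valued). -/
def TPcle {n : ℕ} (q : ℝ) (u : ℝ → EuclideanSpace ℝ (Fin n)) : ℝ≥0∞ :=
  ENNReal.ofReal (1 / q) *
    ∫⁻ p in unitSq, ENNReal.ofReal
      (‖projPerp (deriv u p.2) (u p.1 - u p.2)‖ ^ q / ‖u p.1 - u p.2‖ ^ (2 * q) *
        (‖deriv u p.1‖ * ‖deriv u p.2‖))

/-- The integrand of the functional `M(u; v, w)`. -/
def Mintegrand {n : ℕ} (q : ℝ) (u v w : ℝ → EuclideanSpace ℝ (Fin n)) (p : ℝ × ℝ) : ℝ :=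
  wedgeSq (deriv u p.2) (u p.1 - u p.2) ^ ((q - 2) / 2) / ‖u p.1 - u p.2‖ ^ (2 * q) *
    wedgeInner (deriv u p.2) (u p.1 - u p.2) (deriv v p.2)
      (w p.1 - w p.2 - wrap (p.1 - p.2) • deriv w p.2)

/-- The functional `M(u; v, w)` appearing in the first variation of `TP`. -/
def Mfun {n : ℕ} (q : ℝ) (u v w : ℝ → EuclideanSpace ℝ (Fin n)) : ℝ :=
  ∫ p in unitSq, Mintegrand q u v w p

/-- The integrand of the functional `A(u; v, w)`. -/
def Aintegrand {n : ℕ} (q : ℝ) (u v w : ℝ → EuclideanSpace ℝ (Fin n)) (p : ℝ × ℝ) : ℝ :=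
  wedgeSq (deriv u p.2) (u p.1 - u p.2) ^ (q / 2) / ‖u p.1 - u p.2‖ ^ (2 * q + 2) *
    ⟪v p.1 - v p.2, w p.1 - w p.2⟫

/-- The functional `A(u; v, w)` appearing in the first variation of `TP`. -/
def Afun {n : ℕ} (q : ℝ) (u v w : ℝ → EuclideanSpace ℝ (Fin n)) : ℝ :=
  ∫ p in unitSq, Aintegrand q u v w p

/-- The first variation `δTP(u)[w] = M(u;u,w) + M(u;w,u) - 2A(u;u,w)`. -/
def deltaTP {n : ℕ} (q : ℝ) (u w : ℝ → EuclideanSpace ℝ (Fin n)) : ℝ :=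
  Mfun q u u w + Mfun q u w u - 2 * Afun q u u w

/-- The `H²` inner product on periodic curves. -/
def H2inner (v w : ℝ → EuclideanSpace ℝ (Fin 3)) : ℝ :=
  ∫ x in Ioc (0 : ℝ) 1,
    (⟪v x, w x⟫ + ⟪deriv v x, deriv w x⟫ + ⟪deriv (deriv v) x, deriv (deriv w) x⟫)

/-- The total energy `E(u) = (κ/2)∫|u''|² + ρ TP(u)`. -/
def energyE (κ ρ q : ℝ) (u : ℝ → EuclideanSpace ℝ (Fin 3)) : ℝ :=
  κ / 2 * (∫ x in Ioc (0 : ℝ) 1, ‖deriv (deriv u) x‖ ^ 2) + ρ * TPr q u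

theorem lintegral_Ioc_add_one_eq {f : ℝ → ℝ≥0∞} (hf : Function.Periodic f 1) (a : ℝ) :
    ∫⁻ x in Ioc a (a + 1), f x = ∫⁻ x in Ioc (0 : ℝ) 1, f x := by
  have h := (isAddFundamentalDomain_Ioc one_pos a (volume : Measure ℝ)).setLIntegral_eq
    (isAddFundamentalDomain_Ioc one_pos 0 (volume : Measure ℝ)) f (by
      rintro ⟨g, hg⟩ x
      obtain ⟨k, rfl⟩ := AddSubgroup.mem_zmultiples_iff.1 hg
      change f (k • (1 : ℝ) + x) = f x
      rw [add_comm]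
      exact hf.zsmul k x)
  simpa using h

theorem lintegral_comp_affine_le {f : ℝ → ℝ≥0∞} (hf : Function.Periodic f 1) (a : ℝ) {r : ℝ}
    (hr0 : r ≠ 0) (hr1 : |r| ≤ 1) :
    ∫⁻ σ in Ioc (0 : ℝ) 1, f (a + r * σ) ≤
      ENNReal.ofReal |r|⁻¹ * ∫⁻ x in Ioc (0 : ℝ) 1, f x := by
  have himg := lintegral_image_eq_lintegral_abs_deriv_mul (s := Ioc (0 : ℝ) 1)
    (f := fun σ => a + r * σ) (f' := fun _ => r) measurableSet_Ioc
    (fun x _ => by simpa using (((hasDerivAt_id x).const_mul r).const_add a).hasDerivWithinAt)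
    (fun x _ y _ h => by simpa [hr0] using h) f
  have hle : ∫⁻ x in (fun σ => a + r * σ) '' Ioc (0 : ℝ) 1, f x ≤ ∫⁻ x in Ioc (0 : ℝ) 1, f x := by
    rcases lt_or_gt_of_ne hr0 with h | h
    · rw [abs_of_neg h] at hr1
      rw [← lintegral_Ioc_add_one_eq hf (a - 1), ← setLIntegral_congr Ico_ae_eq_Ioc]
      refine lintegral_mono_set ?_
      rintro _ ⟨σ, ⟨h1, h2⟩, rfl⟩
      constructor <;> simp only <;> nlinarith
    · rw [abs_of_pos h] at hr1
      rw [← lintegral_Ioc_add_one_eq hf a]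
      refine lintegral_mono_set ?_
      rintro _ ⟨σ, ⟨h1, h2⟩, rfl⟩
      constructor <;> simp only <;> nlinarith
  rw [lintegral_const_mul' _ _ ENNReal.ofReal_ne_top] at himg
  have hpos : 0 < |r| := abs_pos.2 hr0
  calc ∫⁻ σ in Ioc (0 : ℝ) 1, f (a + r * σ)
      = ENNReal.ofReal |r|⁻¹ * (ENNReal.ofReal |r| * ∫⁻ σ in Ioc (0 : ℝ) 1, f (a + r * σ)) := by
        rw [← mul_assoc, ← ENNReal.ofReal_mul (by positivity), inv_mul_cancel₀ hpos.ne']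
        simp
    _ ≤ _ := by rw [← himg]; gcongr

theorem le_add_rpow_mul_rpow {q x l : ℝ} (hq : 1 ≤ q) (hx : 0 ≤ x) (hl : 0 < l) :
    x ≤ l + l ^ (1 - q) * x ^ q := by
  rcases le_total x l with h | h
  · have : 0 ≤ l ^ (1 - q) * x ^ q := by positivity
    linarith
  · have hx0 : 0 < x := hl.trans_le h
    have h1 : x ^ (1 - q) ≤ l ^ (1 - q) := Real.rpow_le_rpow_of_nonpos hl h (by linarith)
    have h2 : x = x ^ (1 - q) * x ^ q := by
      rw [← Real.rpow_add hx0]; simp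
    have h3 : x ^ (1 - q) * x ^ q ≤ l ^ (1 - q) * x ^ q := by gcongr
    linarith

/-- Constant in the Morrey estimate `norm_sub_le_of_scale_bound`. -/
def morreyConst (q : ℝ) : ℝ := 2 / (1 - (1 / 2) ^ (1 - 2 / q))

theorem morrey_exponent_pos {q : ℝ} (hq : 2 < q) : 0 < 1 - 2 / q := by
  rw [sub_pos, div_lt_one (by linarith)]; exact hq

theorem morreyConst_denom_pos {q : ℝ} (hq : 2 < q) : 0 < 1 - (1 / 2 : ℝ) ^ (1 - 2 / q) := by
  rw [sub_pos]
  exact Real.rpow_lt_one (by norm_num) (by norm_num) (morrey_exponent_pos hq)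

theorem morreyConst_pos {q : ℝ} (hq : 2 < q) : 0 < morreyConst q :=
  div_pos two_pos (morreyConst_denom_pos hq)

section Morrey

variable {F : Type*} [NormedAddCommGroup F] {f : ℝ → F} {q B : ℝ}

theorem mean_osc_halving (hf : Continuous f) (hq : 2 < q) (hB : 0 < B) {a r : ℝ} (hr0 : r ≠ 0)
    (H : ∫⁻ σ in Ioc (0 : ℝ) 1, ∫⁻ τ in Ioc (0 : ℝ) 1,
      ENNReal.ofReal (‖f (a + r * σ) - f (a + r / 2 * τ)‖ ^ q) ≤
        ENNReal.ofReal (|r| ^ (q - 2) * B ^ q)) :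
    ∫⁻ σ in Ioc (0 : ℝ) 1, ENNReal.ofReal ‖f (a + r * σ) - f a‖ ≤
      (∫⁻ σ in Ioc (0 : ℝ) 1, ENNReal.ofReal ‖f (a + r / 2 * σ) - f a‖) +
        ENNReal.ofReal (2 * (B * |r| ^ (1 - 2 / q))) := by
  have hr : 0 < |r| := abs_pos.2 hr0
  set l : ℝ := B * |r| ^ (1 - 2 / q) with hl
  have hl0 : 0 < l := by positivity
  have hlq : l ^ (1 - q) * (|r| ^ (q - 2) * B ^ q) = l := by
    have h1 : |r| ^ (q - 2) * B ^ q = l ^ q := by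
      rw [hl, Real.mul_rpow hB.le (by positivity), ← Real.rpow_mul hr.le, mul_comm]
      congr 2
      field_simp
    rw [h1, ← Real.rpow_add hl0]; simp
  have hpt : ∀ σ τ : ℝ, ENNReal.ofReal ‖f (a + r * σ) - f a‖ ≤
      ENNReal.ofReal ‖f (a + r / 2 * τ) - f a‖ + (ENNReal.ofReal l + ENNReal.ofReal (l ^ (1 - q)) *
        ENNReal.ofReal (‖f (a + r * σ) - f (a + r / 2 * τ)‖ ^ q)) := by
    intro σ τ
    rw [← ENNReal.ofReal_mul (by positivity), ← ENNReal.ofReal_add hl0.le (by positivity),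
      ← ENNReal.ofReal_add (by positivity) (by positivity)]
    refine ENNReal.ofReal_le_ofReal ?_
    have := norm_sub_le_norm_sub_add_norm_sub (f (a + r * σ)) (f (a + r / 2 * τ)) (f a)
    have := le_add_rpow_mul_rpow (q := q) (by linarith)
      (norm_nonneg (f (a + r * σ) - f (a + r / 2 * τ))) hl0
    linarith
  set D := ∫⁻ σ in Ioc (0 : ℝ) 1, ENNReal.ofReal ‖f (a + r / 2 * σ) - f a‖ with hD
  have hpt2 : ∀ σ : ℝ, ENNReal.ofReal ‖f (a + r * σ) - f a‖ ≤ D + (ENNReal.ofReal l +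
      ENNReal.ofReal (l ^ (1 - q)) * ∫⁻ τ in Ioc (0 : ℝ) 1,
        ENNReal.ofReal (‖f (a + r * σ) - f (a + r / 2 * τ)‖ ^ q)) := by
    intro σ
    calc ENNReal.ofReal ‖f (a + r * σ) - f a‖
        = ∫⁻ τ in Ioc (0 : ℝ) 1, ENNReal.ofReal ‖f (a + r * σ) - f a‖ := by simp
      _ ≤ _ := lintegral_mono (hpt σ)
      _ = _ := by
        rw [lintegral_add_left (Continuous.measurable (by fun_prop)).ennreal_ofReal,
          lintegral_add_left (by fun_prop), lintegral_const_mul' _ _ ENNReal.ofReal_ne_top]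
        simp [hD]
  calc ∫⁻ σ in Ioc (0 : ℝ) 1, ENNReal.ofReal ‖f (a + r * σ) - f a‖
      ≤ _ := lintegral_mono hpt2
    _ = D + (ENNReal.ofReal l + ENNReal.ofReal (l ^ (1 - q)) * ∫⁻ σ in Ioc (0 : ℝ) 1,
        ∫⁻ τ in Ioc (0 : ℝ) 1, ENNReal.ofReal (‖f (a + r * σ) - f (a + r / 2 * τ)‖ ^ q)) := by
        rw [lintegral_add_left (by fun_prop), lintegral_add_left (by fun_prop),
          lintegral_const_mul' _ _ ENNReal.ofReal_ne_top]
        simp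
    _ ≤ D + (ENNReal.ofReal l + ENNReal.ofReal (l ^ (1 - q)) *
          ENNReal.ofReal (|r| ^ (q - 2) * B ^ q)) := by gcongr
    _ = D + ENNReal.ofReal (2 * l) := by
        rw [← ENNReal.ofReal_mul (by positivity), hlq, ← ENNReal.ofReal_add hl0.le hl0.le, two_mul]

theorem mean_osc_le (hf : Continuous f) (hq : 2 < q) (hB : 0 < B)
    (H : ∀ a r : ℝ, r ≠ 0 → |r| ≤ 1 → ∫⁻ σ in Ioc (0 : ℝ) 1, ∫⁻ τ in Ioc (0 : ℝ) 1,
      ENNReal.ofReal (‖f (a + r * σ) - f (a + r / 2 * τ)‖ ^ q) ≤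
        ENNReal.ofReal (|r| ^ (q - 2) * B ^ q)) (a : ℝ) {r : ℝ} (hr1 : |r| ≤ 1) :
    ∫⁻ σ in Ioc (0 : ℝ) 1, ENNReal.ofReal ‖f (a + r * σ) - f a‖ ≤
      ENNReal.ofReal (morreyConst q * B * |r| ^ (1 - 2 / q)) := by
  rcases eq_or_ne r 0 with rfl | hr0
  · simp
  have hC := morreyConst_pos hq
  have iter : ∀ k : ℕ, ∀ r : ℝ, r ≠ 0 → |r| ≤ 1 →
      ∫⁻ σ in Ioc (0 : ℝ) 1, ENNReal.ofReal ‖f (a + r * σ) - f a‖ ≤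
      (∫⁻ σ in Ioc (0 : ℝ) 1, ENNReal.ofReal ‖f (a + r / 2 ^ k * σ) - f a‖) +
        ENNReal.ofReal (morreyConst q * B * |r| ^ (1 - 2 / q)) := by
    intro k
    induction k with
    | zero => intro r _ _; simp
    | succ k ih =>
      intro r hr0 hr1
      have hr2 : |r / 2| = |r| * (1 / 2) := by rw [abs_div, abs_two]; ring
      have h1 := mean_osc_halving hf hq hB hr0 (H a r hr0 hr1)
      have h2 := ih (r / 2) (by simpa using hr0) (by rw [hr2]; linarith [abs_nonneg r])
      have e : r / 2 / 2 ^ k = r / 2 ^ (k + 1) := by rw [pow_succ]; field_simp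
      rw [e] at h2
      refine h1.trans ((add_le_add_left h2 _).trans ?_)
      rw [add_assoc, ← ENNReal.ofReal_add (by positivity) (by positivity)]
      gcongr
      rw [hr2, Real.mul_rpow (abs_nonneg r) (by norm_num)]
      have : morreyConst q * (1 - (1 / 2) ^ (1 - 2 / q)) = 2 :=
        div_mul_cancel₀ _ (morreyConst_denom_pos hq).ne'
      have key : morreyConst q * (1 / 2) ^ (1 - 2 / q) + 2 = morreyConst q := by linarith
      apply le_of_eq
      calc _ = (morreyConst q * (1 / 2) ^ (1 - 2 / q) + 2) * B * |r| ^ (1 - 2 / q) := by ring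
        _ = _ := by rw [key]
  refine ENNReal.le_of_forall_pos_le_add fun ε hε _ => ?_
  obtain ⟨δ, hδ, hfδ⟩ := Metric.continuous_iff.1 hf a ε (by exact_mod_cast hε)
  obtain ⟨k, hk⟩ := exists_pow_lt_of_lt_one hδ (show (1 / 2 : ℝ) < 1 by norm_num)
  refine (iter k r hr0 hr1).trans ?_
  rw [add_comm]
  gcongr
  calc ∫⁻ σ in Ioc (0 : ℝ) 1, ENNReal.ofReal ‖f (a + r / 2 ^ k * σ) - f a‖
      ≤ ∫⁻ σ in Ioc (0 : ℝ) 1, (ε : ℝ≥0∞) := by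
        refine setLIntegral_mono' measurableSet_Ioc fun σ hσ => ?_
        refine ENNReal.ofReal_le_of_le_toReal ?_
        rw [← dist_eq_norm]
        refine (hfδ _ ?_).le
        rw [Real.dist_eq, add_sub_cancel_left, abs_mul, abs_div, abs_of_pos hσ.1,
          abs_of_pos (by positivity : (0 : ℝ) < 2 ^ k)]
        calc |r| / 2 ^ k * σ ≤ 1 / 2 ^ k * 1 := by
              gcongr
              exacts [hσ.1.le, hσ.2]
          _ = (1 / 2) ^ k := by rw [one_div_pow, mul_one]
          _ < δ := hk
    _ = ε := by simp

/-- Morrey's estimate with exponent `1 - 2 / q`. -/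
theorem norm_sub_le_of_scale_bound (hf : Continuous f) (hq : 2 < q) (hB : 0 < B)
    (H : ∀ a r : ℝ, r ≠ 0 → |r| ≤ 1 → ∫⁻ σ in Ioc (0 : ℝ) 1, ∫⁻ τ in Ioc (0 : ℝ) 1,
      ENNReal.ofReal (‖f (a + r * σ) - f (a + r / 2 * τ)‖ ^ q) ≤
        ENNReal.ofReal (|r| ^ (q - 2) * B ^ q)) {a b : ℝ} (hab : |b - a| ≤ 1) :
    ‖f b - f a‖ ≤ 2 * morreyConst q * B * |b - a| ^ (1 - 2 / q) := by
  have hC := morreyConst_pos hq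
  have h1 := mean_osc_le hf hq hB H a hab
  have h2 := mean_osc_le hf hq hB H b (r := a - b) (by rwa [abs_sub_comm])
  have h3 : ∫⁻ σ in Ioc (0 : ℝ) 1, ENNReal.ofReal ‖f (b + (a - b) * σ) - f b‖ =
      ∫⁻ σ in Ioc (0 : ℝ) 1, ENNReal.ofReal ‖f (a + (b - a) * σ) - f b‖ := by
    have himg := lintegral_image_eq_lintegral_abs_deriv_mul (s := Ioc (0 : ℝ) 1)
      (f := fun σ => 1 - σ) (f' := fun _ => -1) measurableSet_Ioc
      (fun x _ => by simpa using ((hasDerivAt_id x).const_sub 1).hasDerivWithinAt)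
      (fun x _ y _ h => by simpa using h)
      (fun σ => ENNReal.ofReal ‖f (a + (b - a) * σ) - f b‖)
    rw [Set.image_const_sub_Ioc, sub_self, sub_zero, setLIntegral_congr Ico_ae_eq_Ioc] at himg
    rw [himg]
    simp only [abs_neg, abs_one, ENNReal.ofReal_one, one_mul]
    congr 1 with σ
    congr 4
    ring
  rw [h3, abs_sub_comm] at h2
  have : ENNReal.ofReal ‖f b - f a‖ ≤
      ENNReal.ofReal (2 * morreyConst q * B * |b - a| ^ (1 - 2 / q)) := by
    calc ENNReal.ofReal ‖f b - f a‖ = ∫⁻ σ in Ioc (0 : ℝ) 1, ENNReal.ofReal ‖f b - f a‖ := by simp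
      _ ≤ ∫⁻ σ in Ioc (0 : ℝ) 1, (ENNReal.ofReal ‖f (a + (b - a) * σ) - f b‖ +
            ENNReal.ofReal ‖f (a + (b - a) * σ) - f a‖) := by
          refine lintegral_mono fun σ => ?_
          rw [← ENNReal.ofReal_add (norm_nonneg _) (norm_nonneg _)]
          refine ENNReal.ofReal_le_ofReal ?_
          rw [norm_sub_rev (f (a + (b - a) * σ)) (f b)]
          exact norm_sub_le_norm_sub_add_norm_sub _ _ _
      _ ≤ _ := by
          rw [lintegral_add_left (Continuous.measurable (by fun_prop)).ennreal_ofReal]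
          refine (add_le_add h2 h1).trans ?_
          rw [← ENNReal.ofReal_add (by positivity) (by positivity)]
          apply le_of_eq; congr 1; ring
  exact (ENNReal.ofReal_le_ofReal_iff (by positivity)).1 this

/-- A periodic double-integral bound yields the scale bounds used in Morrey's estimate. -/
theorem scale_bound_of_periodic (hq : 2 < q) {K : ℝ → ℝ → ℝ≥0∞} {A : ℝ}
    (hK1 : ∀ t, Function.Periodic (fun s => K s t) 1) (hK2 : ∀ s, Function.Periodic (K s) 1)
    (hle : ∀ s t, |s - t| ≤ 1 →
      ENNReal.ofReal (‖f s - f t‖ ^ q) ≤ ENNReal.ofReal (|s - t| ^ q) * K s t)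
    (hA : ∫⁻ s in Ioc (0 : ℝ) 1, ∫⁻ t in Ioc (0 : ℝ) 1, K s t ≤ ENNReal.ofReal A)
    (a r : ℝ) (hr0 : r ≠ 0) (hr1 : |r| ≤ 1) :
    ∫⁻ σ in Ioc (0 : ℝ) 1, ∫⁻ τ in Ioc (0 : ℝ) 1,
      ENNReal.ofReal (‖f (a + r * σ) - f (a + r / 2 * τ)‖ ^ q) ≤
        ENNReal.ofReal (|r| ^ (q - 2) * (2 * A)) := by
  have hr : 0 < |r| := abs_pos.2 hr0
  have hr2 : |r / 2| = |r| / 2 := by rw [abs_div, abs_two]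
  calc ∫⁻ σ in Ioc (0 : ℝ) 1, ∫⁻ τ in Ioc (0 : ℝ) 1,
      ENNReal.ofReal (‖f (a + r * σ) - f (a + r / 2 * τ)‖ ^ q)
      ≤ ∫⁻ σ in Ioc (0 : ℝ) 1, ∫⁻ τ in Ioc (0 : ℝ) 1,
        ENNReal.ofReal (|r| ^ q) * K (a + r * σ) (a + r / 2 * τ) := by
        refine setLIntegral_mono' measurableSet_Ioc fun σ hσ =>
          setLIntegral_mono' measurableSet_Ioc fun τ hτ => ?_
        have h1 : |(a + r * σ) - (a + r / 2 * τ)| ≤ |r| := by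
          rw [show (a + r * σ) - (a + r / 2 * τ) = r * (σ - τ / 2) by ring, abs_mul]
          refine mul_le_of_le_one_right hr.le (abs_le.2 ⟨?_, ?_⟩) <;>
            linarith [hσ.1, hσ.2, hτ.1, hτ.2]
        refine (hle _ _ (h1.trans hr1)).trans ?_
        gcongr
    _ = ENNReal.ofReal (|r| ^ q) * ∫⁻ σ in Ioc (0 : ℝ) 1, ∫⁻ τ in Ioc (0 : ℝ) 1,
        K (a + r * σ) (a + r / 2 * τ) := by
        simp_rw [lintegral_const_mul' _ _ ENNReal.ofReal_ne_top]
    _ ≤ ENNReal.ofReal (|r| ^ q) * ∫⁻ σ in Ioc (0 : ℝ) 1, ENNReal.ofReal |r / 2|⁻¹ *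
          ∫⁻ t in Ioc (0 : ℝ) 1, K (a + r * σ) t := by
        gcongr with σ
        exact lintegral_comp_affine_le (hK2 _) a (by simpa using hr0) (by rw [hr2]; linarith)
    _ = ENNReal.ofReal (|r| ^ q) * (ENNReal.ofReal |r / 2|⁻¹ * ∫⁻ σ in Ioc (0 : ℝ) 1,
          ∫⁻ t in Ioc (0 : ℝ) 1, K (a + r * σ) t) := by
        rw [lintegral_const_mul' _ _ ENNReal.ofReal_ne_top]
    _ ≤ ENNReal.ofReal (|r| ^ q) * (ENNReal.ofReal |r / 2|⁻¹ * (ENNReal.ofReal |r|⁻¹ *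
          ENNReal.ofReal A)) := by
        gcongr
        refine (lintegral_comp_affine_le (f := fun s => ∫⁻ t in Ioc (0 : ℝ) 1, K s t)
          (fun s => ?_) a hr0 hr1).trans (by gcongr)
        exact lintegral_congr fun t => hK1 t s
    _ = _ := by
        rw [← ENNReal.ofReal_mul (by positivity), ← ENNReal.ofReal_mul (by positivity),
          ← ENNReal.ofReal_mul (by positivity), hr2]
        congr 1
        rw [Real.rpow_sub hr, Real.rpow_two]
        field_simp

end Morrey

theorem wrap_eq_add (z : ℝ) : wrap z = z + ⌊1 / 2 - z⌋ := by
  unfold wrap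
  rw [Int.fract]
  ring

theorem neg_half_lt_wrap (z : ℝ) : -(1 / 2) < wrap z := by
  have := Int.fract_lt_one (1 / 2 - z)
  unfold wrap; linarith

theorem wrap_le_half (z : ℝ) : wrap z ≤ 1 / 2 := by
  have := Int.fract_nonneg (1 / 2 - z)
  unfold wrap; linarith

theorem abs_wrap_le_half (z : ℝ) : |wrap z| ≤ 1 / 2 :=
  abs_le.2 ⟨(neg_half_lt_wrap z).le, wrap_le_half z⟩

theorem wrap_of_mem {z : ℝ} (hz : z ∈ Ioc (-(1 / 2) : ℝ) (1 / 2)) : wrap z = z := by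
  unfold wrap
  rw [Int.fract_eq_self.2 ⟨by linarith [hz.2], by linarith [hz.1]⟩]
  ring

theorem wrap_add_one (z : ℝ) : wrap (z + 1) = wrap z := by
  unfold wrap
  rw [show 1 / 2 - (z + 1) = 1 / 2 - z - 1 by ring, Int.fract_sub_one]

theorem circDist_eq_abs_wrap (x y : ℝ) : circDist x y = |wrap (x - y)| := by
  have h : ((x - y : ℝ) : AddCircle (1 : ℝ)) = ((wrap (x - y) : ℝ) : AddCircle (1 : ℝ)) := by
    rw [wrap_eq_add, AddCircle.coe_add]
    simp
  unfold circDist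
  rw [h, AddCircle.norm_coe_eq_abs_iff 1 one_ne_zero, abs_one]
  exact abs_wrap_le_half _

theorem circDist_le_abs_sub (x y : ℝ) : circDist x y ≤ |x - y| := by
  rw [circDist_eq_abs_wrap]
  by_cases h : x - y ∈ Ioc (-(1 / 2) : ℝ) (1 / 2)
  · rw [wrap_of_mem h]
  · refine (abs_wrap_le_half _).trans ?_
    by_contra! h2
    rw [abs_lt] at h2
    exact h ⟨h2.1, h2.2.le⟩

theorem measurable_wrap : Measurable wrap := by
  unfold wrap
  fun_prop

section LineProj

variable {n : ℕ}

theorem wedgeSq_nonneg (a b : EuclideanSpace ℝ (Fin n)) : 0 ≤ wedgeSq a b := by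
  unfold wedgeSq
  have h := abs_real_inner_le_norm a b
  have := sq_le_sq' (by linarith [neg_abs_le ⟪a, b⟫, abs_nonneg ⟪a, b⟫]) ((le_abs_self _).trans h)
  nlinarith

theorem wedgeSq_le (a b : EuclideanSpace ℝ (Fin n)) : wedgeSq a b ≤ (‖a‖ * ‖b‖) ^ 2 := by
  unfold wedgeSq
  nlinarith [sq_nonneg ⟪a, b⟫]

/-- Orthogonal projection onto the line spanned by `v`. -/
def lineProj (v : EuclideanSpace ℝ (Fin n)) :
    EuclideanSpace ℝ (Fin n) →L[ℝ] EuclideanSpace ℝ (Fin n) :=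
  InnerProductSpace.rankOne ℝ (‖v‖⁻¹ • v) (‖v‖⁻¹ • v)

theorem norm_rankOne_sub_le {T e : EuclideanSpace ℝ (Fin n)} (hT : ‖T‖ = 1) (he : ‖e‖ = 1) :
    ‖InnerProductSpace.rankOne ℝ T T - InnerProductSpace.rankOne ℝ e e‖ ≤
      4 * √(1 - ⟪T, e⟫ ^ 2) := by
  set c := ⟪T, e⟫ with hc
  set p := T - c • e with hp
  have hTp : T = c • e + p := by rw [hp]; abel
  have hp2 : ‖p‖ ^ 2 = 1 - c ^ 2 := by
    rw [hp, norm_sub_sq_real, inner_smul_right, norm_smul, hT, he, ← hc, mul_one, Real.norm_eq_abs,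
      sq_abs]
    ring
  have hpn : ‖p‖ = √(1 - c ^ 2) := by rw [← hp2, Real.sqrt_sq (norm_nonneg _)]
  have hp1 : ‖p‖ ≤ 1 := by nlinarith [sq_nonneg c, norm_nonneg p]
  have hc1 : |c| ≤ 1 := by
    have := abs_real_inner_le_norm T e
    rwa [hT, he, one_mul] at this
  rw [← hpn]
  refine ContinuousLinearMap.opNorm_le_bound _ (by positivity) fun v => ?_
  have hv : (InnerProductSpace.rankOne ℝ T T - InnerProductSpace.rankOne ℝ e e) v =
      (-(‖p‖ ^ 2 * ⟪e, v⟫)) • e + (c * ⟪p, v⟫) • e + (c * ⟪e, v⟫) • p + ⟪p, v⟫ • p := by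
    simp only [sub_apply, InnerProductSpace.rankOne_apply]
    rw [hTp, hp2, inner_add_left, inner_smul_left]
    simp only [conj_trivial]
    module
  have h1 : |⟪e, v⟫| ≤ ‖v‖ := by simpa [he] using abs_real_inner_le_norm e v
  have h2 : |⟪p, v⟫| ≤ ‖p‖ * ‖v‖ := abs_real_inner_le_norm p v
  have hpp := norm_nonneg p
  have hvv := norm_nonneg v
  have t1 : ‖(-(‖p‖ ^ 2 * ⟪e, v⟫)) • e‖ ≤ ‖p‖ * ‖v‖ := by
    rw [norm_smul, he, mul_one, norm_neg, norm_mul, Real.norm_eq_abs, Real.norm_eq_abs,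
      abs_of_nonneg (sq_nonneg _)]
    gcongr
    nlinarith
  have t2 : ‖(c * ⟪p, v⟫) • e‖ ≤ ‖p‖ * ‖v‖ := by
    rw [norm_smul, he, mul_one, norm_mul, Real.norm_eq_abs, Real.norm_eq_abs]
    calc |c| * |⟪p, v⟫| ≤ 1 * (‖p‖ * ‖v‖) := by gcongr
      _ = _ := one_mul _
  have t3 : ‖(c * ⟪e, v⟫) • p‖ ≤ ‖p‖ * ‖v‖ := by
    rw [norm_smul, norm_mul, Real.norm_eq_abs, Real.norm_eq_abs]
    calc |c| * |⟪e, v⟫| * ‖p‖ ≤ 1 * ‖v‖ * ‖p‖ := by gcongr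
      _ = _ := by ring
  have t4 : ‖⟪p, v⟫ • p‖ ≤ ‖p‖ * ‖v‖ := by
    rw [norm_smul, Real.norm_eq_abs]
    calc |⟪p, v⟫| * ‖p‖ ≤ ‖p‖ * ‖v‖ * 1 := by gcongr
      _ = _ := by ring
  rw [hv]
  refine (norm_add_le _ _).trans ?_
  have := norm_add_le ((-(‖p‖ ^ 2 * ⟪e, v⟫)) • e + (c * ⟪p, v⟫) • e) ((c * ⟪e, v⟫) • p)
  have := norm_add_le ((-(‖p‖ ^ 2 * ⟪e, v⟫)) • e) ((c * ⟪p, v⟫) • e)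
  linarith

theorem norm_lineProj_sub_le {a b : EuclideanSpace ℝ (Fin n)} (ha : a ≠ 0) (hb : b ≠ 0) :
    ‖lineProj a - lineProj b‖ ≤ 4 * (√(wedgeSq a b) / (‖a‖ * ‖b‖)) := by
  have ha' : 0 < ‖a‖ := norm_pos_iff.2 ha
  have hb' : 0 < ‖b‖ := norm_pos_iff.2 hb
  refine (norm_rankOne_sub_le (by simp [norm_smul, ha'.ne']) (by simp [norm_smul, hb'.ne'])).trans
    (le_of_eq ?_)
  congr 1
  rw [real_inner_smul_left, real_inner_smul_right]
  have : 1 - (‖a‖⁻¹ * (‖b‖⁻¹ * ⟪a, b⟫)) ^ 2 = wedgeSq a b / (‖a‖ * ‖b‖) ^ 2 := by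
    unfold wedgeSq; field_simp
  rw [this, Real.sqrt_div' _ (sq_nonneg _), Real.sqrt_sq (by positivity)]

theorem inner_lineProj_self (a b : EuclideanSpace ℝ (Fin n)) :
    ⟪lineProj a b, b⟫ = ⟪a, b⟫ ^ 2 / ‖a‖ ^ 2 := by
  unfold lineProj
  rw [InnerProductSpace.rankOne_apply, real_inner_smul_left, real_inner_smul_left]
  ring

theorem inner_sq_div_sub_le (a c b : EuclideanSpace ℝ (Fin n)) :
    ⟪a, b⟫ ^ 2 / ‖a‖ ^ 2 - ⟪c, b⟫ ^ 2 / ‖c‖ ^ 2 ≤ ‖lineProj a - lineProj c‖ * ‖b‖ ^ 2 := by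
  rw [← inner_lineProj_self, ← inner_lineProj_self, ← inner_sub_left,
    ← sub_apply]
  refine (real_inner_le_norm _ _).trans ?_
  have := (lineProj a - lineProj c).le_opNorm b
  rw [sq, ← mul_assoc]
  gcongr

theorem continuous_lineProj_comp {f : ℝ → EuclideanSpace ℝ (Fin n)} (hf : Continuous f)
    (h0 : ∀ x, f x ≠ 0) : Continuous fun x => lineProj (f x) := by
  have h : Continuous fun x => ‖f x‖⁻¹ • f x :=
    (hf.norm.inv₀ fun x => norm_ne_zero_iff.2 (h0 x)).smul hf
  exact ((InnerProductSpace.rankOne ℝ).continuous.comp h).clm_apply h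

/-- A curve whose tangent line turns little stays bi-Lipschitz. -/
theorem mul_sub_le_norm_sub_of_lineProj {u : ℝ → EuclideanSpace ℝ (Fin n)} {lam a b : ℝ}
    (hu : ContDiff ℝ 1 u) (hlam : 0 < lam) (hlow : ∀ x, lam ≤ ‖deriv u x‖) (hab : a ≤ b)
    (hosc : ∀ s ∈ Icc a b, ‖lineProj (deriv u a) - lineProj (deriv u s)‖ ≤ 1 / 4) :
    lam / 2 * (b - a) ≤ ‖u b - u a‖ := by
  have hcont : Continuous (deriv u) := hu.continuous_deriv le_rfl
  set v := deriv u a with hv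
  have hv0 : 0 < ‖v‖ := hlam.trans_le (hlow a)
  have hsq : ∀ s ∈ Icc a b, 3 / 4 * (‖deriv u s‖ ^ 2 * ‖v‖ ^ 2) ≤ ⟪deriv u s, v⟫ ^ 2 := by
    intro s hs
    have hs0 : 0 < ‖deriv u s‖ := hlam.trans_le (hlow s)
    have h1 := inner_sq_div_sub_le v (deriv u s) v
    have h2 : ‖lineProj v - lineProj (deriv u s)‖ * ‖v‖ ^ 2 ≤ 1 / 4 * ‖v‖ ^ 2 := by
      gcongr; exact hosc s hs
    rw [real_inner_self_eq_norm_sq] at h1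
    have h3 : (‖v‖ ^ 2) ^ 2 / ‖v‖ ^ 2 = ‖v‖ ^ 2 := by field_simp
    rw [h3] at h1
    have h4 : 3 / 4 * ‖v‖ ^ 2 ≤ ⟪deriv u s, v⟫ ^ 2 / ‖deriv u s‖ ^ 2 := by linarith
    rw [le_div_iff₀ (by positivity)] at h4
    linarith
  have hφc : Continuous fun s => ⟪deriv u s, v⟫ := by fun_prop
  have hpos : ∀ s ∈ Icc a b, 0 < ⟪deriv u s, v⟫ := by
    intro s hs
    by_contra! hneg
    have ha0 : 0 ≤ ⟪deriv u a, v⟫ := by rw [← hv, real_inner_self_eq_norm_sq]; positivity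
    obtain ⟨t, ht, ht0⟩ := intermediate_value_Icc' hs.1 hφc.continuousOn ⟨hneg, ha0⟩
    have h5 := hsq t ⟨ht.1, ht.2.trans hs.2⟩
    have hs0 : 0 < ‖deriv u t‖ := hlam.trans_le (hlow t)
    simp only at ht0
    rw [ht0] at h5
    have : 0 < 3 / 4 * (‖deriv u t‖ ^ 2 * ‖v‖ ^ 2) := by positivity
    norm_num at h5
    linarith
  have hlow' : ∀ s ∈ Icc a b, lam / 2 * ‖v‖ ≤ ⟪deriv u s, v⟫ := by
    intro s hs
    refine le_of_sq_le_sq ?_ (hpos s hs).le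
    refine le_trans ?_ (hsq s hs)
    have := hlow s
    have h6 : lam ^ 2 ≤ ‖deriv u s‖ ^ 2 := by gcongr
    have h7 : 0 ≤ ‖v‖ ^ 2 := sq_nonneg _
    nlinarith
  have hd : ∀ s, HasDerivAt (fun s => ⟪u s, v⟫) ⟪deriv u s, v⟫ s := by
    intro s
    have h8 := ((hu.differentiable one_ne_zero) s).hasDerivAt.inner ℝ (hasDerivAt_const s v)
    simpa using h8
  have hmv := (convex_Icc a b).mul_sub_le_image_sub_of_le_deriv
    (f := fun s => ⟪u s, v⟫) (fun s _ => (hd s).continuousAt.continuousWithinAt)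
    (fun s _ => (hd s).differentiableAt.differentiableWithinAt)
    (C := lam / 2 * ‖v‖)
    (fun s hs => by rw [(hd s).deriv]; exact hlow' s (interior_subset hs))
    a ⟨le_rfl, hab⟩ b ⟨hab, le_rfl⟩ hab
  rw [← inner_sub_left] at hmv
  have h9 := real_inner_le_norm (u b - u a) v
  refine le_of_mul_le_mul_right ?_ hv0
  linarith

end LineProj

theorem periodic_deriv {F : Type*} [NormedAddCommGroup F] [NormedSpace ℝ F] {f : ℝ → F}
    (hf : Function.Periodic f 1) : Function.Periodic (deriv f) 1 := by
  intro x
  rw [← deriv_comp_add_const]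
  congr 1
  exact funext hf

theorem setLIntegral_unitSq_eq {F : ℝ × ℝ → ℝ≥0∞} (hF : Measurable F) :
    ∫⁻ p in unitSq, F p = ∫⁻ x in Ioc (0 : ℝ) 1, ∫⁻ y in Ioc (0 : ℝ) 1, F (x, y) := by
  rw [unitSq, Measure.volume_eq_prod, ← Measure.prod_restrict, lintegral_prod _ hF.aemeasurable]

theorem setLIntegral_unitSq_eq_symm {F : ℝ × ℝ → ℝ≥0∞} (hF : Measurable F) :
    ∫⁻ p in unitSq, F p = ∫⁻ y in Ioc (0 : ℝ) 1, ∫⁻ x in Ioc (0 : ℝ) 1, F (x, y) := by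
  rw [unitSq, Measure.volume_eq_prod, ← Measure.prod_restrict,
    lintegral_prod_symm _ hF.aemeasurable]

theorem add_rpow_le_two_rpow_mul {x y q : ℝ} (hx : 0 ≤ x) (hy : 0 ≤ y) (hq : 0 ≤ q) :
    (x + y) ^ q ≤ 2 ^ q * (x ^ q + y ^ q) := by
  have h1 : 0 ≤ x ^ q := by positivity
  have h2 : 0 ≤ y ^ q := by positivity
  have h3 : (0 : ℝ) ≤ 2 ^ q := by positivity
  rcases le_total x y with h | h
  · calc (x + y) ^ q ≤ (2 * y) ^ q := by gcongr; linarith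
      _ = 2 ^ q * y ^ q := Real.mul_rpow two_pos.le hy
      _ ≤ _ := by gcongr; linarith
  · calc (x + y) ^ q ≤ (2 * x) ^ q := by gcongr; linarith
      _ = 2 ^ q * x ^ q := Real.mul_rpow two_pos.le hx
      _ ≤ _ := by gcongr; linarith

section Curves

variable {n : ℕ}

/-- The integrand of the tangent-point functional. -/
def tpKernel (q : ℝ) (u : ℝ → EuclideanSpace ℝ (Fin n)) (x y : ℝ) : ℝ :=
  wedgeSq (deriv u y) (u x - u y) ^ (q / 2) / ‖u x - u y‖ ^ (2 * q)

/-- Embedded periodic `C¹` curves with speed between `lam` and `Λ`. -/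
structure AdmissibleCurve (lam Λ : ℝ) (u : ℝ → EuclideanSpace ℝ (Fin n)) : Prop where
  contDiff : ContDiff ℝ 1 u
  periodic : Function.Periodic u 1
  embedded : Embedded u
  lower : ∀ x, lam ≤ ‖deriv u x‖
  upper : ∀ x, ‖deriv u x‖ ≤ Λ

theorem Embedded.exists_intCast_eq_sub {u : ℝ → EuclideanSpace ℝ (Fin n)} (hu : Embedded u)
    {x y : ℝ} (h : u x = u y) : ∃ k : ℤ, (k : ℝ) = x - y := by
  have h1 : ((x - y : ℝ) : AddCircle (1 : ℝ)) = 0 := by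
    rw [AddCircle.coe_sub, hu x y h, sub_self]
  obtain ⟨k, hk⟩ := (AddCircle.coe_eq_zero_iff 1).1 h1
  exact ⟨k, by simpa using hk⟩

theorem tpKernel_nonneg (q : ℝ) (u : ℝ → EuclideanSpace ℝ (Fin n)) (x y : ℝ) :
    0 ≤ tpKernel q u x y := by
  have := wedgeSq_nonneg (deriv u y) (u x - u y)
  unfold tpKernel
  positivity

theorem continuous_wedgeSq : Continuous fun p : EuclideanSpace ℝ (Fin n) ×
    EuclideanSpace ℝ (Fin n) => wedgeSq p.1 p.2 := by
  unfold wedgeSq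
  fun_prop

theorem measurable_tpKernel (q : ℝ) {u : ℝ → EuclideanSpace ℝ (Fin n)} (hu : ContDiff ℝ 1 u) :
    Measurable fun p : ℝ × ℝ => tpKernel q u p.1 p.2 := by
  have h1 := hu.continuous
  have h2 := hu.continuous_deriv le_rfl
  unfold tpKernel
  refine Measurable.div ?_ ?_
  · exact (Continuous.measurable (continuous_wedgeSq.comp
      ((by fun_prop : Continuous fun p : ℝ × ℝ => (deriv u p.2, u p.1 - u p.2))))).pow_const _
  · exact (Continuous.measurable (by fun_prop : Continuous fun p : ℝ × ℝ =>
      ‖u p.1 - u p.2‖)).pow_const _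

theorem tpKernel_periodic_left (q : ℝ) {u : ℝ → EuclideanSpace ℝ (Fin n)}
    (hu : Function.Periodic u 1) (y : ℝ) : Function.Periodic (fun x => tpKernel q u x y) 1 := by
  intro x
  simp only [tpKernel, hu x]

theorem tpKernel_periodic_right (q : ℝ) {u : ℝ → EuclideanSpace ℝ (Fin n)}
    (hu : Function.Periodic u 1) (x : ℝ) : Function.Periodic (tpKernel q u x) 1 := by
  intro y
  simp only [tpKernel, hu y, periodic_deriv hu y]

theorem setLIntegral_tpKernel_le {q M : ℝ} (hq : 0 < q) {u : ℝ → EuclideanSpace ℝ (Fin n)}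
    (h : TPe q u ≤ ENNReal.ofReal M) :
    ∫⁻ p in unitSq, ENNReal.ofReal (tpKernel q u p.1 p.2) ≤ ENNReal.ofReal (q * M) := by
  calc ∫⁻ p in unitSq, ENNReal.ofReal (tpKernel q u p.1 p.2)
      = ENNReal.ofReal q * TPe q u := by
        unfold TPe
        rw [← mul_assoc, ← ENNReal.ofReal_mul hq.le, mul_one_div_cancel hq.ne']
        simp [tpKernel]
    _ ≤ _ := by
        rw [ENNReal.ofReal_mul hq.le]
        gcongr

theorem AdmissibleCurve.norm_sub_le {lam Λ : ℝ} {u : ℝ → EuclideanSpace ℝ (Fin n)}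
    (hu : AdmissibleCurve lam Λ u) (s t : ℝ) : ‖u s - u t‖ ≤ Λ * |s - t| :=
  convex_univ.norm_image_sub_le_of_norm_deriv_le
    (fun x _ => (hu.contDiff.differentiable one_ne_zero) x) (fun x _ => hu.upper x)
    (mem_univ t) (mem_univ s)

theorem norm_lineProj_sub_chord_le {q lam Λ : ℝ} (hq : 2 < q) (hlam : 0 < lam)
    {u : ℝ → EuclideanSpace ℝ (Fin n)} (hu : AdmissibleCurve lam Λ u) {s t : ℝ}
    (hst : u s ≠ u t) :
    ‖lineProj (deriv u t) - lineProj (u s - u t)‖ ≤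
      4 * Λ / lam * |s - t| * tpKernel q u s t ^ (1 / q) := by
  have hq0 : q ≠ 0 := by linarith
  have hb : 0 < ‖u s - u t‖ := norm_pos_iff.2 (sub_ne_zero.2 hst)
  have ha : 0 < ‖deriv u t‖ := hlam.trans_le (hu.lower t)
  have hW := wedgeSq_nonneg (deriv u t) (u s - u t)
  have hk : tpKernel q u s t ^ (1 / q) = √(wedgeSq (deriv u t) (u s - u t)) / ‖u s - u t‖ ^ 2 := by
    unfold tpKernel
    rw [Real.div_rpow (by positivity) (by positivity), ← Real.rpow_mul hW, ← Real.rpow_mul hb.le,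
      Real.sqrt_eq_rpow, show q / 2 * (1 / q) = 1 / 2 by field_simp,
      show 2 * q * (1 / q) = 2 by field_simp, Real.rpow_two]
  refine (norm_lineProj_sub_le (norm_pos_iff.1 ha) (norm_pos_iff.1 hb)).trans ?_
  have h1 : √(wedgeSq (deriv u t) (u s - u t)) / (‖deriv u t‖ * ‖u s - u t‖) =
      ‖u s - u t‖ / ‖deriv u t‖ * tpKernel q u s t ^ (1 / q) := by
    rw [hk]; field_simp
  rw [h1]
  have hk0 : 0 ≤ tpKernel q u s t ^ (1 / q) := Real.rpow_nonneg (tpKernel_nonneg q u s t) _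
  have h2 : ‖u s - u t‖ / ‖deriv u t‖ ≤ Λ * |s - t| / lam :=
    div_le_div₀ ((norm_nonneg _).trans (hu.norm_sub_le s t)) (hu.norm_sub_le s t) hlam (hu.lower t)
  calc 4 * (‖u s - u t‖ / ‖deriv u t‖ * tpKernel q u s t ^ (1 / q))
      ≤ 4 * (Λ * |s - t| / lam * tpKernel q u s t ^ (1 / q)) := by gcongr
    _ = _ := by ring

theorem lineProj_neg (v : EuclideanSpace ℝ (Fin n)) : lineProj (-v) = lineProj v := by
  ext1 w
  simp [lineProj, InnerProductSpace.rankOne_apply]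

theorem norm_lineProj_sub_rpow_le {q lam Λ : ℝ} (hq : 2 < q) (hlam : 0 < lam) (hΛ : lam ≤ Λ)
    {u : ℝ → EuclideanSpace ℝ (Fin n)} (hu : AdmissibleCurve lam Λ u) (s t : ℝ) :
    ‖lineProj (deriv u s) - lineProj (deriv u t)‖ ^ q ≤
      |s - t| ^ q * ((2 * (4 * Λ / lam)) ^ q * (tpKernel q u s t + tpKernel q u t s)) := by
  have hq0 : q ≠ 0 := by linarith
  have k1 := tpKernel_nonneg q u s t
  have k2 := tpKernel_nonneg q u t s
  have hΛ0 : 0 < Λ := hlam.trans_le hΛ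
  by_cases hst : u s = u t
  · have : deriv u s = deriv u t := by
      obtain ⟨k, hk⟩ := hu.embedded.exists_intCast_eq_sub hst
      rw [show s = t + k * 1 by linarith]
      exact (periodic_deriv hu.periodic).int_mul k t
    rw [this, sub_self, norm_zero, Real.zero_rpow hq0]
    positivity
  · have h1 := norm_lineProj_sub_chord_le hq hlam hu hst
    have h2 := norm_lineProj_sub_chord_le hq hlam hu (Ne.symm hst)
    rw [← neg_sub (u s), lineProj_neg, abs_sub_comm] at h2
    have h3 : ‖lineProj (deriv u s) - lineProj (deriv u t)‖ ≤ 4 * Λ / lam * |s - t| *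
        (tpKernel q u s t ^ (1 / q) + tpKernel q u t s ^ (1 / q)) := by
      have h4 := norm_sub_le_norm_sub_add_norm_sub (lineProj (deriv u s)) (lineProj (u s - u t))
        (lineProj (deriv u t))
      rw [norm_sub_rev (lineProj (u s - u t))] at h4
      linarith
    have e1 : (tpKernel q u s t ^ (1 / q)) ^ q = tpKernel q u s t := by
      rw [← Real.rpow_mul k1, one_div_mul_cancel hq0, Real.rpow_one]
    have e2 : (tpKernel q u t s ^ (1 / q)) ^ q = tpKernel q u t s := by
      rw [← Real.rpow_mul k2, one_div_mul_cancel hq0, Real.rpow_one]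
    calc ‖lineProj (deriv u s) - lineProj (deriv u t)‖ ^ q
        ≤ (4 * Λ / lam * |s - t| *
          (tpKernel q u s t ^ (1 / q) + tpKernel q u t s ^ (1 / q))) ^ q := by
          gcongr
      _ = (4 * Λ / lam) ^ q * |s - t| ^ q *
          (tpKernel q u s t ^ (1 / q) + tpKernel q u t s ^ (1 / q)) ^ q := by
          rw [Real.mul_rpow (by positivity) (by positivity),
            Real.mul_rpow (by positivity) (by positivity)]
      _ ≤ (4 * Λ / lam) ^ q * |s - t| ^ q *
          (2 ^ q * (tpKernel q u s t + tpKernel q u t s)) := by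
          gcongr
          refine (add_rpow_le_two_rpow_mul (by positivity) (by positivity) (by linarith)).trans ?_
          rw [e1, e2]
      _ = _ := by
          rw [Real.mul_rpow two_pos.le (by positivity)]
          ring

/-- Uniform Hölder continuity of the tangent lines of curves of bounded tangent-point energy. -/
theorem exists_lineProj_holder (n : ℕ) {q lam Λ M : ℝ} (hq : 2 < q) (hlam : 0 < lam)
    (hΛ : lam ≤ Λ) (hM : 0 < M) :
    ∃ C : ℝ, 0 < C ∧ ∀ u : ℝ → EuclideanSpace ℝ (Fin n), AdmissibleCurve lam Λ u →
      TPe q u ≤ ENNReal.ofReal M → ∀ s t, |s - t| ≤ 1 →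
      ‖lineProj (deriv u s) - lineProj (deriv u t)‖ ≤ C * |s - t| ^ (1 - 2 / q) := by
  have hq0 : 0 < q := by linarith
  have hΛ0 : 0 < Λ := hlam.trans_le hΛ
  set c : ℝ := (2 * (4 * Λ / lam)) ^ q with hc
  have hc0 : 0 < c := by positivity
  set B : ℝ := (2 * (c * (q * M + q * M))) ^ (1 / q) with hB
  have hB0 : 0 < B := by positivity
  have hBq : B ^ q = 2 * (c * (q * M + q * M)) := by
    rw [hB, ← Real.rpow_mul (by positivity), one_div_mul_cancel hq0.ne', Real.rpow_one]
  refine ⟨2 * morreyConst q * B, mul_pos (mul_pos two_pos (morreyConst_pos hq)) hB0, ?_⟩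
  intro u hu hTP s t hst
  have hcont := continuous_lineProj_comp (hu.contDiff.continuous_deriv le_rfl)
    fun x => norm_pos_iff.1 (hlam.trans_le (hu.lower x))
  refine norm_sub_le_of_scale_bound hcont hq hB0 ?_ hst
  rw [hBq]
  have hmeas := measurable_tpKernel q hu.contDiff
  have hm1 : Measurable fun p : ℝ × ℝ => ENNReal.ofReal (tpKernel q u p.1 p.2) :=
    hmeas.ennreal_ofReal
  have hint := setLIntegral_tpKernel_le hq0 hTP
  have i1 := hint
  rw [setLIntegral_unitSq_eq hm1] at i1
  have i2 := hint
  rw [setLIntegral_unitSq_eq_symm hm1] at i2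
  refine scale_bound_of_periodic (f := fun x => lineProj (deriv u x)) hq
    (K := fun s t => ENNReal.ofReal c * (ENNReal.ofReal (tpKernel q u s t) +
      ENNReal.ofReal (tpKernel q u t s))) ?_ ?_ ?_ ?_
  · intro t s
    simp only [tpKernel_periodic_left q hu.periodic t s,
      tpKernel_periodic_right q hu.periodic t s]
  · intro s t
    simp only [tpKernel_periodic_left q hu.periodic s t,
      tpKernel_periodic_right q hu.periodic s t]
  · intro s t _
    rw [← ENNReal.ofReal_add (tpKernel_nonneg _ _ _ _) (tpKernel_nonneg _ _ _ _),
      ← ENNReal.ofReal_mul hc0.le, ← ENNReal.ofReal_mul (by positivity)]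
    exact ENNReal.ofReal_le_ofReal (norm_lineProj_sub_rpow_le hq hlam hΛ hu s t)
  · simp_rw [lintegral_const_mul' _ _ ENNReal.ofReal_ne_top]
    rw [ENNReal.ofReal_mul hc0.le]
    gcongr
    have e : ∀ s, ∫⁻ t in Ioc (0 : ℝ) 1, (ENNReal.ofReal (tpKernel q u s t) +
        ENNReal.ofReal (tpKernel q u t s)) =
        (∫⁻ t in Ioc (0 : ℝ) 1, ENNReal.ofReal (tpKernel q u s t)) +
        ∫⁻ t in Ioc (0 : ℝ) 1, ENNReal.ofReal (tpKernel q u t s) := fun s =>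
      lintegral_add_left (hm1.comp (by fun_prop : Measurable fun t : ℝ => (s, t))) _
    simp_rw [e]
    rw [lintegral_add_left hm1.lintegral_prod_right', ENNReal.ofReal_add (by positivity)
      (by positivity)]
    exact add_le_add i1 i2

end Curves

section BiLipschitz

variable {n : ℕ} {q lam Λ M δ : ℝ} {u : ℝ → EuclideanSpace ℝ (Fin n)}

theorem AdmissibleCurve.local_lower (hu : AdmissibleCurve lam Λ u) (hlam : 0 < lam)
    (hosc : ∀ s t, |s - t| ≤ δ → ‖lineProj (deriv u s) - lineProj (deriv u t)‖ ≤ 1 / 4)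
    {s t : ℝ} (hst : |s - t| ≤ δ) : lam / 2 * |s - t| ≤ ‖u s - u t‖ := by
  wlog h : t ≤ s generalizing s t
  · rw [abs_sub_comm, norm_sub_rev]
    rw [abs_sub_comm] at hst
    exact this hst (le_of_not_ge h)
  rw [abs_of_nonneg (sub_nonneg.2 h)] at hst ⊢
  refine mul_sub_le_norm_sub_of_lineProj hu.contDiff hlam hu.lower h fun r hr => hosc _ _ ?_
  rw [abs_sub_comm, abs_of_nonneg (sub_nonneg.2 hr.1)]
  linarith [hr.2]

theorem tpKernel_lower_of_transversal {x₀ y₀ s t d : ℝ} (hq : 2 < q) (hlam : 0 < lam)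
    (hu : AdmissibleCurve lam Λ u) (hd : 0 < d) (hd_eq : ‖u x₀ - u y₀‖ = d)
    (horth : ⟪deriv u y₀, u x₀ - u y₀⟫ = 0)
    (hs : ‖u s - u x₀‖ ≤ d / 16) (ht : ‖u t - u y₀‖ ≤ d / 16)
    (hosc : ‖lineProj (deriv u t) - lineProj (deriv u y₀)‖ ≤ 1 / 4) :
    (lam / (16 * d)) ^ q ≤ tpKernel q u s t := by
  set a := deriv u t with ha
  set b := u s - u t with hb
  set c := u x₀ - u y₀ with hc
  have ha1 : lam ≤ ‖a‖ := hu.lower t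
  have ha0 : 0 < ‖a‖ := hlam.trans_le ha1
  have hbc : ‖b - c‖ ≤ d / 8 := by
    have : b - c = (u s - u x₀) - (u t - u y₀) := by rw [hb, hc]; abel
    rw [this]
    linarith [norm_sub_le (u s - u x₀) (u t - u y₀)]
  have hac : |⟪a, c⟫| ≤ d / 2 * ‖a‖ := by
    have h1 := inner_sq_div_sub_le a (deriv u y₀) c
    rw [horth, hd_eq] at h1
    have h2 : ‖lineProj a - lineProj (deriv u y₀)‖ * d ^ 2 ≤ 1 / 4 * d ^ 2 := by gcongr
    have h3 : ⟪a, c⟫ ^ 2 / ‖a‖ ^ 2 ≤ 1 / 4 * d ^ 2 := by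
      norm_num at h1; linarith
    rw [div_le_iff₀ (by positivity)] at h3
    refine abs_le_of_sq_le_sq ?_ (by positivity)
    linarith
  have hab : |⟪a, b⟫| ≤ 5 / 8 * d * ‖a‖ := by
    have e : ⟪a, b⟫ = ⟪a, c⟫ + ⟪a, b - c⟫ := by rw [← inner_add_right]; congr 1; abel
    have h4 : |⟪a, b - c⟫| ≤ ‖a‖ * (d / 8) := (abs_real_inner_le_norm _ _).trans (by gcongr)
    rw [e]
    linarith [abs_add_le ⟪a, c⟫ ⟪a, b - c⟫]
  have hb1 : 7 / 8 * d ≤ ‖b‖ := by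
    have := norm_sub_norm_le c b
    rw [norm_sub_rev c b] at this
    linarith
  have hb2 : ‖b‖ ≤ 2 * d := by
    have := norm_sub_norm_le b c
    linarith
  have hW : (lam * d / 4) ^ 2 ≤ wedgeSq a b := by
    unfold wedgeSq
    have h5 : ⟪a, b⟫ ^ 2 ≤ (5 / 8 * d * ‖a‖) ^ 2 := sq_le_sq' (by linarith [neg_abs_le ⟪a, b⟫])
      ((le_abs_self _).trans hab)
    have h6 : (7 / 8 * d) ^ 2 ≤ ‖b‖ ^ 2 := by gcongr
    have h7 : lam ^ 2 ≤ ‖a‖ ^ 2 := by gcongr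
    have h8 : ‖a‖ ^ 2 * (7 / 8 * d) ^ 2 ≤ ‖a‖ ^ 2 * ‖b‖ ^ 2 := by gcongr
    have h9 : lam ^ 2 * d ^ 2 ≤ ‖a‖ ^ 2 * d ^ 2 := by gcongr
    have h10 : 0 ≤ lam ^ 2 * d ^ 2 := by positivity
    nlinarith
  unfold tpKernel
  have h11 : (lam / (16 * d)) ^ q = ((lam * d / 4) ^ 2) ^ (q / 2) / (2 * d) ^ (2 * q) := by
    have e : ((lam * d / 4) ^ 2) ^ (q / 2) = (lam * d / 4) ^ q := by
      rw [← Real.rpow_two, ← Real.rpow_mul (by positivity), mul_div_cancel₀ q two_ne_zero]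
    rw [e, Real.rpow_mul (by positivity) 2 q, Real.rpow_two,
      ← Real.div_rpow (by positivity) (by positivity)]
    congr 1
    field_simp
    norm_num
  rw [h11]
  have hb0 : 0 < ‖b‖ := by linarith
  have hW0 := Real.rpow_nonneg (wedgeSq_nonneg a b) (q / 2)
  gcongr

theorem energy_lower_of_window {x₀ y₀ ρ m : ℝ} (hq : 2 < q) (hM : 0 < M)
    (hu : AdmissibleCurve lam Λ u) (hTP : TPe q u ≤ ENNReal.ofReal M) (hρ0 : 0 < ρ) (hρ1 : ρ ≤ 1)
    (hm : ∀ σ ∈ Ioc (0 : ℝ) 1, ∀ τ ∈ Ioc (0 : ℝ) 1,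
      m ≤ tpKernel q u (x₀ + ρ * σ) (y₀ + ρ * τ)) :
    m * ρ ^ 2 ≤ q * M := by
  have hq0 : 0 < q := by linarith
  have hint := setLIntegral_tpKernel_le hq0 hTP
  rw [setLIntegral_unitSq_eq (measurable_tpKernel q hu.contDiff).ennreal_ofReal] at hint
  simp only at hint
  have hρabs : |ρ| = ρ := abs_of_pos hρ0
  have key : ENNReal.ofReal m ≤ ENNReal.ofReal (ρ⁻¹ * (ρ⁻¹ * (q * M))) := by
    calc ENNReal.ofReal m
        = ∫⁻ σ in Ioc (0 : ℝ) 1, ∫⁻ τ in Ioc (0 : ℝ) 1, ENNReal.ofReal m := by simp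
      _ ≤ ∫⁻ σ in Ioc (0 : ℝ) 1, ∫⁻ τ in Ioc (0 : ℝ) 1,
          ENNReal.ofReal (tpKernel q u (x₀ + ρ * σ) (y₀ + ρ * τ)) :=
          setLIntegral_mono' measurableSet_Ioc fun σ hσ =>
            setLIntegral_mono' measurableSet_Ioc fun τ hτ =>
              ENNReal.ofReal_le_ofReal (hm σ hσ τ hτ)
      _ ≤ ∫⁻ σ in Ioc (0 : ℝ) 1, ENNReal.ofReal |ρ|⁻¹ * ∫⁻ t in Ioc (0 : ℝ) 1,
          ENNReal.ofReal (tpKernel q u (x₀ + ρ * σ) t) := by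
          gcongr with σ
          exact lintegral_comp_affine_le (f := fun t =>
            ENNReal.ofReal (tpKernel q u (x₀ + ρ * σ) t))
            (fun t => by simp only [tpKernel_periodic_right q hu.periodic _ t]) y₀ hρ0.ne'
            (by rwa [hρabs])
      _ = ENNReal.ofReal |ρ|⁻¹ * ∫⁻ σ in Ioc (0 : ℝ) 1, ∫⁻ t in Ioc (0 : ℝ) 1,
          ENNReal.ofReal (tpKernel q u (x₀ + ρ * σ) t) :=
          lintegral_const_mul' _ _ ENNReal.ofReal_ne_top
      _ ≤ ENNReal.ofReal |ρ|⁻¹ * (ENNReal.ofReal |ρ|⁻¹ * ENNReal.ofReal (q * M)) := by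
          gcongr
          refine (lintegral_comp_affine_le (f := fun s => ∫⁻ t in Ioc (0 : ℝ) 1,
            ENNReal.ofReal (tpKernel q u s t)) (fun s => ?_) x₀ hρ0.ne' (by rwa [hρabs])).trans
            (by gcongr)
          refine lintegral_congr fun t => ?_
          have := tpKernel_periodic_left q hu.periodic t s
          simp only at this
          rw [this]
      _ = _ := by
          rw [hρabs, ← ENNReal.ofReal_mul (by positivity), ← ENNReal.ofReal_mul (by positivity)]
  rw [ENNReal.ofReal_le_ofReal_iff (by positivity)] at key
  calc m * ρ ^ 2 ≤ ρ⁻¹ * (ρ⁻¹ * (q * M)) * ρ ^ 2 := by gcongr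
    _ = q * M := by field_simp

/-- Relative window size used to bound the distance of remote strands from below. -/
def windowRatio (Λ δ : ℝ) : ℝ := min (δ / Λ) (1 / (16 * Λ))

/-- Lower bound for the distance of strands with parameter distance at least `δ`. -/
def farConst (q lam Λ M δ : ℝ) : ℝ :=
  min (lam / 2 * δ) ((windowRatio Λ δ ^ 2 * (lam / 16) ^ q / (q * M)) ^ (1 / (q - 2)))

theorem windowRatio_pos (hΛ : 0 < Λ) (hδ : 0 < δ) : 0 < windowRatio Λ δ :=
  lt_min (by positivity) (by positivity)

theorem farConst_pos (hq : 2 < q) (hlam : 0 < lam) (hΛ : lam ≤ Λ) (hM : 0 < M) (hδ : 0 < δ) :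
    0 < farConst q lam Λ M δ := by
  have hq0 : 0 < q := by linarith
  have := windowRatio_pos (hlam.trans_le hΛ) hδ
  exact lt_min (by positivity) (by positivity)

theorem AdmissibleCurve.far_lower_of_critical (hu : AdmissibleCurve lam Λ u) (hq : 2 < q)
    (hlam : 0 < lam) (hΛ : lam ≤ Λ) (hM : 0 < M) (hδ0 : 0 < δ) (hδ1 : δ ≤ 1 / 4)
    (hTP : TPe q u ≤ ENNReal.ofReal M)
    (hosc : ∀ s t, |s - t| ≤ δ → ‖lineProj (deriv u s) - lineProj (deriv u t)‖ ≤ 1 / 4)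
    {x₀ y₀ : ℝ} (hne : u x₀ ≠ u y₀) (hxy : |x₀ - y₀| ≤ 1)
    (horth : ⟪deriv u y₀, u x₀ - u y₀⟫ = 0) :
    (windowRatio Λ δ ^ 2 * (lam / 16) ^ q / (q * M)) ^ (1 / (q - 2)) ≤ ‖u x₀ - u y₀‖ := by
  have hq0 : 0 < q := by linarith
  have hΛ0 : 0 < Λ := hlam.trans_le hΛ
  set η := windowRatio Λ δ with hη
  have hη0 : 0 < η := windowRatio_pos hΛ0 hδ0
  set d := ‖u x₀ - u y₀‖ with hd
  have hd0 : 0 < d := norm_pos_iff.2 (sub_ne_zero.2 hne)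
  have hdΛ : d ≤ Λ := (hu.norm_sub_le x₀ y₀).trans (mul_le_of_le_one_right hΛ0.le hxy)
  set ρ := η * d with hρ
  have hρ0 : 0 < ρ := by positivity
  have hρδ : ρ ≤ δ := by
    calc η * d ≤ δ / Λ * Λ := by gcongr; exact min_le_left _ _
      _ = δ := by field_simp
  have hρd : Λ * ρ ≤ d / 16 := by
    calc Λ * (η * d) ≤ Λ * (1 / (16 * Λ) * d) := by gcongr; exact min_le_right _ _
      _ = d / 16 := by field_simp
  have hstep : ∀ z : ℝ, ∀ σ ∈ Ioc (0 : ℝ) 1, |z + ρ * σ - z| ≤ ρ := by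
    intro z σ hσ
    rw [add_sub_cancel_left, abs_of_pos (mul_pos hρ0 hσ.1)]
    exact mul_le_of_le_one_right hρ0.le hσ.2
  have hnear : ∀ z : ℝ, ∀ σ ∈ Ioc (0 : ℝ) 1, ‖u (z + ρ * σ) - u z‖ ≤ d / 16 := fun z σ hσ =>
    (hu.norm_sub_le _ _).trans (le_trans (by gcongr; exact hstep z σ hσ) hρd)
  have hE := energy_lower_of_window (x₀ := x₀) (y₀ := y₀) (m := (lam / (16 * d)) ^ q) hq hM hu hTP
    hρ0 (by linarith) fun σ hσ τ hτ =>
      tpKernel_lower_of_transversal hq hlam hu hd0 rfl horth (hnear x₀ σ hσ) (hnear y₀ τ hτ)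
        (hosc _ _ ((hstep y₀ τ hτ).trans hρδ))
  have hq2 : 0 < q - 2 := by linarith
  have e : (lam / (16 * d)) ^ q * ρ ^ 2 = η ^ 2 * (lam / 16) ^ q / d ^ (q - 2) := by
    rw [hρ, ← div_div, Real.div_rpow (by positivity) hd0.le, Real.rpow_sub hd0, Real.rpow_two]
    field_simp
  rw [e, div_le_iff₀ (by positivity)] at hE
  have h1 : η ^ 2 * (lam / 16) ^ q / (q * M) ≤ d ^ (q - 2) := by
    rw [div_le_iff₀ (by positivity)]; linarith
  calc (η ^ 2 * (lam / 16) ^ q / (q * M)) ^ (1 / (q - 2)) ≤ (d ^ (q - 2)) ^ (1 / (q - 2)) := by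
        gcongr
    _ = d := by rw [← Real.rpow_mul hd0.le, mul_one_div_cancel hq2.ne', Real.rpow_one]

theorem AdmissibleCurve.far_lower (hu : AdmissibleCurve lam Λ u) (hq : 2 < q)
    (hlam : 0 < lam) (hΛ : lam ≤ Λ) (hM : 0 < M) (hδ0 : 0 < δ) (hδ1 : δ ≤ 1 / 4)
    (hTP : TPe q u ≤ ENNReal.ofReal M)
    (hosc : ∀ s t, |s - t| ≤ δ → ‖lineProj (deriv u s) - lineProj (deriv u t)‖ ≤ 1 / 4)
    (y : ℝ) {h : ℝ} (hh : h ∈ Icc δ (1 - δ)) :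
    farConst q lam Λ M δ ≤ ‖u (y + h) - u y‖ := by
  have hcu := hu.contDiff.continuous
  obtain ⟨⟨y₀, h₀⟩, hmem, hmin⟩ := (isCompact_Icc.prod isCompact_Icc).exists_isMinOn
    (s := Icc (0 : ℝ) 1 ×ˢ Icc δ (1 - δ)) ⟨(0, δ), ⟨by simp, ⟨le_rfl, by linarith⟩⟩⟩
    (f := fun p : ℝ × ℝ => ‖u (p.1 + p.2) - u p.1‖) (by fun_prop)
  have hh0 : h₀ ∈ Icc δ (1 - δ) := hmem.2
  have hmin' : ∀ y : ℝ, ∀ h ∈ Icc δ (1 - δ), ‖u (y₀ + h₀) - u y₀‖ ≤ ‖u (y + h) - u y‖ := by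
    intro y h hh
    have h1 := hmin (show (Int.fract y, h) ∈ Icc (0 : ℝ) 1 ×ˢ Icc δ (1 - δ) from
      ⟨⟨Int.fract_nonneg y, (Int.fract_lt_one y).le⟩, hh⟩)
    have e1 : u (Int.fract y + h) = u (y + h) := by
      rw [← hu.periodic.int_mul ⌊y⌋ (Int.fract y + h), Int.fract]; congr 1; ring
    have e2 : u (Int.fract y) = u y := by
      rw [← hu.periodic.int_mul ⌊y⌋ (Int.fract y), Int.fract]; congr 1; ring
    simpa [e1, e2] using h1
  refine le_trans ?_ (hmin' y h hh)
  rcases eq_or_lt_of_le hh0.1 with h1 | h1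
  · refine (min_le_left _ _).trans ?_
    have := hu.local_lower hlam hosc (s := y₀ + h₀) (t := y₀) (by
      rw [add_sub_cancel_left, abs_of_pos (by linarith)]; linarith)
    rw [add_sub_cancel_left, abs_of_pos (by linarith)] at this
    rwa [h1]
  rcases eq_or_lt_of_le hh0.2 with h2 | h2
  · refine (min_le_left _ _).trans ?_
    have := hu.local_lower hlam hosc (s := y₀ - δ) (t := y₀) (by
      rw [sub_sub_cancel_left, abs_neg, abs_of_pos (by linarith)])
    rw [sub_sub_cancel_left, abs_neg, abs_of_pos hδ0, ← hu.periodic (y₀ - δ)] at this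
    rwa [h2, show y₀ + (1 - δ) = y₀ - δ + 1 by ring]
  refine (min_le_right _ _).trans (hu.far_lower_of_critical hq hlam hΛ hM hδ0 hδ1 hTP hosc ?_ ?_ ?_)
  · intro heq
    obtain ⟨k, hk⟩ := hu.embedded.exists_intCast_eq_sub heq
    rw [add_sub_cancel_left] at hk
    have h3 : (0 : ℝ) < k := by linarith
    have h4 : (k : ℝ) < 1 := by linarith
    have h5 : 0 < k := by exact_mod_cast h3
    have h6 : k < 1 := by exact_mod_cast h4
    omega
  · rw [add_sub_cancel_left, abs_of_pos (by linarith)]; linarith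
  · set x₀ := y₀ + h₀ with hx₀
    have hloc : IsLocalMin (fun t => ‖u x₀ - u t‖ ^ 2) y₀ := by
      have hev : ∀ᶠ t in 𝓝 y₀, x₀ - t ∈ Ioo δ (1 - δ) := by
        have hc : ContinuousAt (fun t : ℝ => x₀ - t) y₀ := by fun_prop
        exact hc.eventually (Ioo_mem_nhds (by rw [hx₀]; linarith) (by rw [hx₀]; linarith))
      filter_upwards [hev] with t ht
      have := hmin' t (x₀ - t) (Ioo_subset_Icc_self ht)
      rw [add_sub_cancel] at this
      gcongr
    have hd := (((hu.contDiff.differentiable one_ne_zero) y₀).hasDerivAt.const_sub (u x₀)).norm_sq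
    have h0 := hloc.hasDerivAt_eq_zero hd
    rw [inner_neg_right, real_inner_comm] at h0
    linarith

end BiLipschitz

/-- Uniform bi-Lipschitz estimate for curves of bounded tangent-point energy. -/
theorem exists_bilipschitz (n : ℕ) {q lam Λ M : ℝ} (hq : 2 < q) (hlam : 0 < lam)
    (hΛ : lam ≤ Λ) (hM : 0 < M) :
    ∃ κ : ℝ, 0 < κ ∧ ∀ u : ℝ → EuclideanSpace ℝ (Fin n), AdmissibleCurve lam Λ u →
      TPe q u ≤ ENNReal.ofReal M → ∀ x y, κ * |wrap (x - y)| ≤ ‖u x - u y‖ := by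
  obtain ⟨C, hC, hhol⟩ := exists_lineProj_holder n hq hlam hΛ hM
  have hα := morrey_exponent_pos hq
  set δ : ℝ := min (1 / 4) ((1 / (4 * C)) ^ (1 / (1 - 2 / q))) with hδ
  have hδ0 : 0 < δ := lt_min (by norm_num) (by positivity)
  have hδ1 : δ ≤ 1 / 4 := min_le_left _ _
  refine ⟨min (lam / 2) (farConst q lam Λ M δ),
    lt_min (by positivity) (farConst_pos hq hlam hΛ hM hδ0), fun u hu hTP => ?_⟩
  have hosc : ∀ s t, |s - t| ≤ δ → ‖lineProj (deriv u s) - lineProj (deriv u t)‖ ≤ 1 / 4 := by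
    intro s t hst
    refine (hhol u hu hTP s t (by linarith)).trans ?_
    calc C * |s - t| ^ (1 - 2 / q) ≤ C * ((1 / (4 * C)) ^ (1 / (1 - 2 / q))) ^ (1 - 2 / q) := by
          gcongr
          exact hst.trans (min_le_right _ _)
      _ = 1 / 4 := by
          rw [← Real.rpow_mul (by positivity), one_div_mul_cancel hα.ne', Real.rpow_one]
          field_simp
  have main : ∀ y h : ℝ, 0 ≤ h → h ≤ 1 / 2 →
      min (lam / 2) (farConst q lam Λ M δ) * h ≤ ‖u (y + h) - u y‖ := by
    intro y h h0 h1
    rcases le_total h δ with h2 | h2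
    · have := hu.local_lower hlam hosc (s := y + h) (t := y)
        (by rwa [add_sub_cancel_left, abs_of_nonneg h0])
      rw [add_sub_cancel_left, abs_of_nonneg h0] at this
      refine le_trans ?_ this
      gcongr
      exact min_le_left _ _
    · refine le_trans ?_ (hu.far_lower hq hlam hΛ hM hδ0 hδ1 hTP hosc y ⟨h2, by linarith⟩)
      have hf := (farConst_pos hq hlam hΛ hM hδ0).le
      calc _ ≤ farConst q lam Λ M δ * 1 := by
            gcongr
            · exact min_le_right _ _
            · linarith
        _ = _ := mul_one _
  intro x y
  have hx : u x = u (y + wrap (x - y)) := by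
    rw [wrap_eq_add, ← hu.periodic.int_mul ⌊1 / 2 - (x - y)⌋ x]
    congr 1; ring
  have hb := abs_le.1 (abs_wrap_le_half (x - y))
  rw [hx]
  rcases le_total 0 (wrap (x - y)) with h | h
  · rw [abs_of_nonneg h]
    exact main y _ h hb.2
  · rw [abs_of_nonpos h, norm_sub_rev]
    have := main (y + wrap (x - y)) (-wrap (x - y)) (by linarith) (by linarith)
    rwa [add_neg_cancel_right] at this

theorem setLIntegral_unitSq_eq_wrap {F : ℝ × ℝ → ℝ≥0∞} (hF : Measurable F)
    (hper : ∀ y, Function.Periodic (fun x => F (x, y)) 1) :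
    ∫⁻ p in unitSq, F p =
      ∫⁻ y in Ioc (0 : ℝ) 1, ∫⁻ h in Ioc (-(1 / 2) : ℝ) (1 / 2), F (y + h, y) := by
  rw [setLIntegral_unitSq_eq_symm hF]
  refine lintegral_congr fun y => ?_
  have hp : Function.Periodic (fun h => F (y + h, y)) 1 := fun h => by
    simp only
    rw [← add_assoc]
    exact hper y (y + h)
  have h1 := lintegral_Ioc_add_one_eq hp (-(1 / 2))
  rw [show (-(1 / 2) + 1 : ℝ) = 1 / 2 by norm_num] at h1
  rw [h1, ← lintegral_Ioc_add_one_eq (hper y) y]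
  have h2 := (measurePreserving_add_left (volume : Measure ℝ) y).setLIntegral_comp_preimage_emb
    (measurableEmbedding_addLeft y) (fun x => F (x, y)) (Ioc y (y + 1))
  rw [← h2]
  simp

theorem lintegral_Ioc_comp_mul_le {τ : ℝ} (hτ : τ ∈ Ioc (0 : ℝ) 1) (f : ℝ → ℝ≥0∞) :
    ENNReal.ofReal τ * ∫⁻ h in Ioc (-(1 / 2) : ℝ) (1 / 2), f (τ * h) ≤
      ∫⁻ h in Ioc (-(1 / 2) : ℝ) (1 / 2), f h := by
  have himg := lintegral_image_eq_lintegral_abs_deriv_mul (s := Ioc (-(1 / 2) : ℝ) (1 / 2))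
    (f := fun σ => τ * σ) (f' := fun _ => τ) measurableSet_Ioc
    (fun x _ => by simpa using ((hasDerivAt_id x).const_mul τ).hasDerivWithinAt)
    (fun x _ y _ h => by simpa [hτ.1.ne'] using h) f
  rw [lintegral_const_mul' _ _ ENNReal.ofReal_ne_top, abs_of_pos hτ.1] at himg
  rw [← himg]
  refine lintegral_mono_set ?_
  rintro _ ⟨σ, ⟨h1, h2⟩, rfl⟩
  have := hτ.1
  have := hτ.2
  constructor <;> simp only <;> nlinarith

theorem lintegral_lintegral_scale_le {φ : ℝ → ℝ≥0∞} (hφ : Measurable φ) :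
    ∫⁻ h in Ioc (-(1 / 2) : ℝ) (1 / 2), ∫⁻ τ in Ioc (0 : ℝ) 1, ENNReal.ofReal τ * φ (τ * h) ≤
      ∫⁻ h in Ioc (-(1 / 2) : ℝ) (1 / 2), φ h := by
  have hm : Measurable fun p : ℝ × ℝ => ENNReal.ofReal p.2 * φ (p.2 * p.1) :=
    measurable_snd.ennreal_ofReal.mul (hφ.comp (by fun_prop))
  rw [lintegral_lintegral_swap hm.aemeasurable]
  calc ∫⁻ τ in Ioc (0 : ℝ) 1, ∫⁻ h in Ioc (-(1 / 2) : ℝ) (1 / 2), ENNReal.ofReal τ * φ (τ * h)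
      = ∫⁻ τ in Ioc (0 : ℝ) 1, ENNReal.ofReal τ *
          ∫⁻ h in Ioc (-(1 / 2) : ℝ) (1 / 2), φ (τ * h) :=
        lintegral_congr fun τ => lintegral_const_mul' _ _ ENNReal.ofReal_ne_top
    _ ≤ ∫⁻ τ in Ioc (0 : ℝ) 1, ∫⁻ h in Ioc (-(1 / 2) : ℝ) (1 / 2), φ h :=
        setLIntegral_mono' measurableSet_Ioc fun τ hτ => lintegral_Ioc_comp_mul_le hτ _
    _ = _ := by simp

theorem integral_rpow_le {q : ℝ} (hq : 1 ≤ q) {g : ℝ → ℝ} (hg : Continuous g)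
    (hg0 : ∀ x, 0 ≤ g x) :
    (∫ τ in Ioc (0 : ℝ) 1, g τ) ^ q ≤ ∫ τ in Ioc (0 : ℝ) 1, g τ ^ q := by
  have : IsProbabilityMeasure (volume.restrict (Ioc (0 : ℝ) 1)) := ⟨by simp⟩
  have hq0 : 0 ≤ q := by linarith
  exact (convexOn_rpow hq).map_integral_le
    (Real.continuous_rpow_const hq0).continuousOn isClosed_Ici
    (Eventually.of_forall hg0) (hg.integrableOn_Ioc)
    ((Real.continuous_rpow_const hq0).comp hg).integrableOn_Ioc

section Remainder

variable {n : ℕ} {q : ℝ} {v : ℝ → EuclideanSpace ℝ (Fin n)}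

/-- The first-order Taylor remainder of a periodic curve at `y`, evaluated at `x`. -/
def taylorRem (v : ℝ → EuclideanSpace ℝ (Fin n)) (x y : ℝ) : EuclideanSpace ℝ (Fin n) :=
  v x - v y - wrap (x - y) • deriv v y

theorem sub_eq_wrap_smul_add_taylorRem (v : ℝ → EuclideanSpace ℝ (Fin n)) (x y : ℝ) :
    v x - v y = wrap (x - y) • deriv v y + taylorRem v x y := by
  unfold taylorRem; abel

theorem measurable_taylorRem (hv : ContDiff ℝ 1 v) :
    Measurable fun p : ℝ × ℝ => taylorRem v p.1 p.2 := by
  have h1 := hv.continuous.measurable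
  have h2 := (hv.continuous_deriv le_rfl).measurable
  have h3 := measurable_wrap
  unfold taylorRem
  fun_prop

theorem taylorRem_periodic_left (hv : Function.Periodic v 1) (y : ℝ) :
    Function.Periodic (fun x => taylorRem v x y) 1 := by
  intro x
  simp only [taylorRem, hv x, show x + 1 - y = x - y + 1 by ring, wrap_add_one]

theorem taylorRem_add_of_mem (y : ℝ) {h : ℝ} (hh : h ∈ Ioc (-(1 / 2) : ℝ) (1 / 2)) :
    taylorRem v (y + h) y = v (y + h) - v y - h • deriv v y := by
  rw [taylorRem, add_sub_cancel_left, wrap_of_mem hh]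

theorem norm_taylor_remainder_rpow_le (hv : ContDiff ℝ 1 v) (hq : 1 ≤ q) (y h : ℝ) :
    ‖v (y + h) - v y - h • deriv v y‖ ^ q ≤
      |h| ^ q * ∫ τ in Ioc (0 : ℝ) 1, ‖deriv v (y + τ * h) - deriv v y‖ ^ q := by
  have hc := hv.continuous_deriv le_rfl
  have hftc : v (y + h) - v y - h • deriv v y =
      h • ∫ τ in (0 : ℝ)..1, (deriv v (y + τ * h) - deriv v y) := by
    have hd : ∀ τ ∈ uIcc (0 : ℝ) 1, HasDerivAt (fun τ => v (y + τ * h) - τ • (h • deriv v y))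
        (h • (deriv v (y + τ * h) - deriv v y)) τ := by
      intro τ _
      have e1 : HasDerivAt (fun τ : ℝ => y + τ * h) h τ := by
        simpa using ((hasDerivAt_id τ).mul_const h).const_add y
      have e2 := ((hv.differentiable one_ne_zero (y + τ * h)).hasDerivAt).scomp τ e1
      have e3 : HasDerivAt (fun τ : ℝ => τ • (h • deriv v y)) ((1 : ℝ) • (h • deriv v y)) τ :=
        (hasDerivAt_id τ).smul_const _
      rw [smul_sub]
      rw [one_smul] at e3
      exact e2.sub e3
    have := intervalIntegral.integral_eq_sub_of_hasDerivAt hd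
      (Continuous.intervalIntegrable (by fun_prop) _ _)
    rw [intervalIntegral.integral_smul] at this
    rw [this]
    simp
    abel
  have hg : Continuous fun τ => ‖deriv v (y + τ * h) - deriv v y‖ := by fun_prop
  rw [hftc, norm_smul, Real.norm_eq_abs, Real.mul_rpow (abs_nonneg _) (norm_nonneg _),
    intervalIntegral.integral_of_le zero_le_one]
  gcongr
  refine le_trans ?_ (integral_rpow_le hq hg fun _ => norm_nonneg _)
  gcongr
  exact norm_integral_le_integral_norm _

theorem ofReal_taylor_remainder_le (hv : ContDiff ℝ 1 v) (hq : 1 ≤ q) (y h : ℝ) :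
    ENNReal.ofReal (‖v (y + h) - v y - h • deriv v y‖ ^ q / |h| ^ (2 * q)) ≤
      ∫⁻ τ in Ioc (0 : ℝ) 1, ENNReal.ofReal τ *
        ENNReal.ofReal (‖deriv v (y + τ * h) - deriv v y‖ ^ q / |τ * h| ^ q) := by
  have hc := hv.continuous_deriv le_rfl
  have hq0 : 0 < q := by linarith
  have hcτ : Continuous fun τ => ‖deriv v (y + τ * h) - deriv v y‖ ^ q :=
    (by fun_prop : Continuous fun τ => ‖deriv v (y + τ * h) - deriv v y‖).rpow_const
      fun _ => Or.inr hq0.le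
  have h1 : ‖v (y + h) - v y - h • deriv v y‖ ^ q / |h| ^ (2 * q) ≤
      ∫ τ in Ioc (0 : ℝ) 1, ‖deriv v (y + τ * h) - deriv v y‖ ^ q / |h| ^ q := by
    rcases eq_or_ne h 0 with rfl | h0
    · simp [Real.zero_rpow hq0.ne']
    have hh0 : 0 < |h| := abs_pos.2 h0
    have hh1 : 0 < |h| ^ q := by positivity
    rw [integral_div, div_le_div_iff₀ (by positivity) (by positivity), two_mul,
      Real.rpow_add hh0]
    calc _ ≤ (|h| ^ q * ∫ τ in Ioc (0 : ℝ) 1, ‖deriv v (y + τ * h) - deriv v y‖ ^ q) *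
          |h| ^ q := by
          gcongr
          exact norm_taylor_remainder_rpow_le hv hq y h
      _ = _ := by ring
  refine (ENNReal.ofReal_le_ofReal h1).trans ?_
  rw [ofReal_integral_eq_lintegral_ofReal (hcτ.div_const _).integrableOn_Ioc
    (Eventually.of_forall fun τ => by positivity)]
  refine setLIntegral_mono' measurableSet_Ioc fun τ hτ => ?_
  rw [← ENNReal.ofReal_mul hτ.1.le]
  refine ENNReal.ofReal_le_ofReal ?_
  rcases eq_or_ne h 0 with rfl | h0
  · simp [Real.zero_rpow hq0.ne']
  have hh0 : 0 < |h| := abs_pos.2 h0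
  rw [abs_mul, abs_of_pos hτ.1, Real.mul_rpow hτ.1.le hh0.le]
  have h2 : τ ^ q ≤ τ := by
    calc τ ^ q ≤ τ ^ (1 : ℝ) :=
          Real.rpow_le_rpow_of_exponent_ge hτ.1 hτ.2 (by linarith)
      _ = τ := Real.rpow_one τ
  have h3 : 0 < τ ^ q := Real.rpow_pos_of_pos hτ.1 _
  rw [← mul_div_assoc, div_le_div_iff₀ (by positivity) (by positivity)]
  calc _ = ‖deriv v (y + τ * h) - deriv v y‖ ^ q * |h| ^ q * τ ^ q := by ring
    _ ≤ ‖deriv v (y + τ * h) - deriv v y‖ ^ q * |h| ^ q * τ := by gcongr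
    _ = _ := by ring

theorem lintegral_taylorRem_le (hv : ContDiff ℝ 1 v) (hper : Function.Periodic v 1) (hq : 2 < q) :
    ∫⁻ p in unitSq, ENNReal.ofReal (‖taylorRem v p.1 p.2‖ ^ q / |wrap (p.1 - p.2)| ^ (2 * q)) ≤
      sobSemPow (1 - 1 / q) q (deriv v) := by
  have hc := hv.continuous_deriv le_rfl
  have hq0 : 0 < q := by linarith
  have hexp : 1 + (1 - 1 / q) * q = q := by field_simp; ring
  have hw := measurable_wrap
  have hT := measurable_taylorRem hv
  let Φ : ℝ → ℝ → ℝ≥0∞ := fun y h =>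
    ENNReal.ofReal (‖deriv v (y + h) - deriv v y‖ ^ q / |h| ^ q)
  have hΦm : ∀ y, Measurable (Φ y) := fun y => by
    have : Measurable fun h : ℝ => ‖deriv v (y + h) - deriv v y‖ :=
      Continuous.measurable (by fun_prop)
    exact ((this.pow_const q).div (continuous_abs.measurable.pow_const q)).ennreal_ofReal
  have hR : sobSemPow (1 - 1 / q) q (deriv v) =
      ∫⁻ y in Ioc (0 : ℝ) 1, ∫⁻ h in Ioc (-(1 / 2) : ℝ) (1 / 2), Φ y h := by
    unfold sobSemPow
    simp only [hexp, circDist_eq_abs_wrap]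
    rw [setLIntegral_unitSq_eq_wrap
      (F := fun p => ENNReal.ofReal (‖deriv v p.1 - deriv v p.2‖ ^ q / |wrap (p.1 - p.2)| ^ q))]
    · refine lintegral_congr fun y => setLIntegral_congr_fun measurableSet_Ioc fun h hh => ?_
      simp only [Φ, add_sub_cancel_left, wrap_of_mem hh]
    · have : Measurable fun p : ℝ × ℝ => ‖deriv v p.1 - deriv v p.2‖ :=
        Continuous.measurable (by fun_prop)
      fun_prop
    · intro y x
      simp only [periodic_deriv hper x, show x + 1 - y = x - y + 1 by ring, wrap_add_one]
  rw [hR, setLIntegral_unitSq_eq_wrap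
    (F := fun p => ENNReal.ofReal (‖taylorRem v p.1 p.2‖ ^ q / |wrap (p.1 - p.2)| ^ (2 * q)))]
  · refine lintegral_mono fun y => ?_
    calc ∫⁻ h in Ioc (-(1 / 2) : ℝ) (1 / 2),
          ENNReal.ofReal (‖taylorRem v (y + h) y‖ ^ q / |wrap (y + h - y)| ^ (2 * q))
        ≤ ∫⁻ h in Ioc (-(1 / 2) : ℝ) (1 / 2), ∫⁻ τ in Ioc (0 : ℝ) 1,
          ENNReal.ofReal τ * Φ y (τ * h) := by
          refine setLIntegral_mono' measurableSet_Ioc fun h hh => ?_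
          rw [taylorRem_add_of_mem y hh, add_sub_cancel_left, wrap_of_mem hh]
          exact ofReal_taylor_remainder_le hv (by linarith) y h
      _ ≤ _ := lintegral_lintegral_scale_le (hΦm y)
  · exact ((hT.norm.pow_const q).div
      ((continuous_abs.measurable.comp (hw.comp (by fun_prop))).pow_const _)).ennreal_ofReal
  · intro y x
    have := taylorRem_periodic_left hper y x
    simp only at this
    simp only [this, show x + 1 - y = x - y + 1 by ring, wrap_add_one]

end Remainder

section WnormBounds

variable {n : ℕ} {s q μ : ℝ} {f : ℝ → EuclideanSpace ℝ (Fin n)}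

theorem integral_norm_rpow_nonneg (q : ℝ) (f : ℝ → EuclideanSpace ℝ (Fin n)) :
    0 ≤ ∫ x in Ioc (0 : ℝ) 1, ‖f x‖ ^ q :=
  integral_nonneg fun _ => by positivity

theorem Wnorm_nonneg (s q : ℝ) (f : ℝ → EuclideanSpace ℝ (Fin n)) : 0 ≤ Wnorm s q f := by
  have := integral_norm_rpow_nonneg q f
  unfold Wnorm
  positivity

theorem integral_norm_rpow_le_of_Wnorm_le (hq : 0 < q) (h : Wnorm s q f ≤ μ) :
    ∫ x in Ioc (0 : ℝ) 1, ‖f x‖ ^ q ≤ μ ^ q := by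
  have h0 := integral_norm_rpow_nonneg q f
  have h1 : (∫ x in Ioc (0 : ℝ) 1, ‖f x‖ ^ q) ^ (1 / q) ≤ μ := by
    refine le_trans ?_ h
    exact le_add_of_nonneg_right (by positivity)
  calc _ = ((∫ x in Ioc (0 : ℝ) 1, ‖f x‖ ^ q) ^ (1 / q)) ^ q := by
        rw [← Real.rpow_mul h0, one_div_mul_cancel hq.ne', Real.rpow_one]
    _ ≤ _ := by gcongr

theorem sobSemPow_le_of_Wnorm_le (hq : 0 < q) (hf : sobSemPow s q f < ⊤) (h : Wnorm s q f ≤ μ) :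
    sobSemPow s q f ≤ ENNReal.ofReal (μ ^ q) := by
  have h0 := integral_norm_rpow_nonneg q f
  have h1 : (sobSemPow s q f).toReal ^ (1 / q) ≤ μ := by
    refine le_trans ?_ h
    exact le_add_of_nonneg_left (by positivity)
  rw [← ENNReal.ofReal_toReal hf.ne]
  refine ENNReal.ofReal_le_ofReal ?_
  calc _ = ((sobSemPow s q f).toReal ^ (1 / q)) ^ q := by
        rw [← Real.rpow_mul ENNReal.toReal_nonneg, one_div_mul_cancel hq.ne', Real.rpow_one]
    _ ≤ _ := by gcongr

theorem le_Wnorm_of_le_norm {l : ℝ} (hq : 0 < q) (hf : Continuous f) (hl : 0 ≤ l)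
    (h : ∀ x, l ≤ ‖f x‖) : l ≤ Wnorm s q f := by
  have h1 : l ^ q ≤ ∫ x in Ioc (0 : ℝ) 1, ‖f x‖ ^ q := by
    calc l ^ q = ∫ x in Ioc (0 : ℝ) 1, l ^ q := by simp
      _ ≤ _ := by
        refine setIntegral_mono (by simp) (hf.norm.rpow_const fun _ =>
          Or.inr hq.le).integrableOn_Ioc fun x => ?_
        have := h x
        gcongr
  calc l = (l ^ q) ^ (1 / q) := by
        rw [← Real.rpow_mul hl, mul_one_div_cancel hq.ne', Real.rpow_one]
    _ ≤ (∫ x in Ioc (0 : ℝ) 1, ‖f x‖ ^ q) ^ (1 / q) := by gcongr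
    _ ≤ _ := le_add_of_nonneg_right (by positivity)

theorem setLIntegral_sobKernel_le (hq : 2 < q) (hf : Continuous f)
    (hfin : sobSemPow (1 - 1 / q) q f < ⊤) (hμ : Wnorm (1 - 1 / q) q f ≤ μ) :
    ∫⁻ x in Ioc (0 : ℝ) 1, ∫⁻ y in Ioc (0 : ℝ) 1,
      ENNReal.ofReal (‖f x - f y‖ ^ q / |wrap (x - y)| ^ q) ≤ ENNReal.ofReal (μ ^ q) := by
  have hexp : 1 + (1 - 1 / q) * q = q := by
    have : q ≠ 0 := by linarith
    field_simp; ring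
  have h := sobSemPow_le_of_Wnorm_le (by linarith) hfin hμ
  have hm : Measurable fun p : ℝ × ℝ => ‖f p.1 - f p.2‖ := Continuous.measurable (by fun_prop)
  have hw := measurable_wrap
  unfold sobSemPow at h
  simp only [hexp, circDist_eq_abs_wrap] at h
  rwa [setLIntegral_unitSq_eq] at h
  exact ((hm.pow_const q).div
    ((continuous_abs.measurable.comp (hw.comp (by fun_prop))).pow_const _)).ennreal_ofReal

theorem norm_le_of_Wnorm_le (hq : 2 < q) (hf : Continuous f) (hper : Function.Periodic f 1)
    (hfin : sobSemPow (1 - 1 / q) q f < ⊤) (hμ0 : 0 < μ) (hμ : Wnorm (1 - 1 / q) q f ≤ μ)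
    (a : ℝ) : ‖f a‖ ≤ (2 + 2 * morreyConst q) * μ := by
  have hq0 : 0 < q := by linarith
  have hC := morreyConst_pos hq
  have hH : ∀ a r : ℝ, r ≠ 0 → |r| ≤ 1 → ∫⁻ σ in Ioc (0 : ℝ) 1, ∫⁻ τ in Ioc (0 : ℝ) 1,
      ENNReal.ofReal (‖f (a + r * σ) - f (a + r / 2 * τ)‖ ^ q) ≤
        ENNReal.ofReal (|r| ^ (q - 2) * (2 * μ) ^ q) := by
    intro a r hr0 hr1
    refine (scale_bound_of_periodic hq
      (K := fun x y => ENNReal.ofReal (‖f x - f y‖ ^ q / |wrap (x - y)| ^ q)) (A := μ ^ q)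
      (fun t x => ?_) (fun x y => ?_) (fun x y _ => ?_)
      (setLIntegral_sobKernel_le hq hf hfin hμ) a r hr0 hr1).trans ?_
    · simp only [hper x, show x + 1 - t = x - t + 1 by ring, wrap_add_one]
    · have : wrap (x - y) = wrap (x - (y + 1)) := by
        rw [← wrap_add_one (x - (y + 1))]; congr 1; ring
      simp only [hper y, this]
    · rw [← ENNReal.ofReal_mul (by positivity)]
      refine ENNReal.ofReal_le_ofReal ?_
      rcases eq_or_ne (wrap (x - y)) 0 with h0 | h0
      · have hxy : f x = f y := by
          rw [wrap_eq_add] at h0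
          rw [show y = x + ⌊1 / 2 - (x - y)⌋ * 1 by linarith]
          exact (hper.int_mul _ x).symm
        simp [hxy, Real.zero_rpow hq0.ne']
      · have hw0 : 0 < |wrap (x - y)| := abs_pos.2 h0
        have hle : |wrap (x - y)| ≤ |x - y| := by
          rw [← circDist_eq_abs_wrap]; exact circDist_le_abs_sub x y
        rw [← mul_div_assoc, le_div_iff₀ (by positivity), mul_comm]
        gcongr
    · refine ENNReal.ofReal_le_ofReal ?_
      rw [Real.mul_rpow two_pos.le hμ0.le]
      gcongr
      calc (2 : ℝ) = 2 ^ (1 : ℝ) := (Real.rpow_one 2).symm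
        _ ≤ 2 ^ q := Real.rpow_le_rpow_of_exponent_le one_le_two (by linarith)
  have hosc := mean_osc_le hf hq (by positivity : 0 < 2 * μ) hH a (r := 1) (by simp)
  have hcq : Continuous fun x => ‖f x‖ ^ q := hf.norm.rpow_const fun _ => Or.inr hq0.le
  have hmean : ∫⁻ σ in Ioc (0 : ℝ) 1, ENNReal.ofReal (‖f (a + 1 * σ)‖ ^ q) ≤
      ENNReal.ofReal (μ ^ q) := by
    refine (lintegral_comp_affine_le (f := fun x => ENNReal.ofReal (‖f x‖ ^ q))
      (fun x => by simp only [hper x]) a one_ne_zero (by simp)).trans ?_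
    rw [← ofReal_integral_eq_lintegral_ofReal hcq.integrableOn_Ioc
      (Eventually.of_forall fun x => by positivity)]
    simpa using ENNReal.ofReal_le_ofReal (integral_norm_rpow_le_of_Wnorm_le hq0 hμ)
  have key : ENNReal.ofReal ‖f a‖ ≤ ENNReal.ofReal ((2 + 2 * morreyConst q) * μ) := by
    calc ENNReal.ofReal ‖f a‖ = ∫⁻ σ in Ioc (0 : ℝ) 1, ENNReal.ofReal ‖f a‖ := by simp
      _ ≤ ∫⁻ σ in Ioc (0 : ℝ) 1, (ENNReal.ofReal μ + ENNReal.ofReal (μ ^ (1 - q)) *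
          ENNReal.ofReal (‖f (a + 1 * σ)‖ ^ q) + ENNReal.ofReal ‖f (a + 1 * σ) - f a‖) := by
          refine lintegral_mono fun σ => ?_
          rw [← ENNReal.ofReal_mul (by positivity), ← ENNReal.ofReal_add hμ0.le (by positivity),
            ← ENNReal.ofReal_add (by positivity) (by positivity)]
          refine ENNReal.ofReal_le_ofReal ?_
          have h1 := norm_sub_norm_le (f a) (f (a + 1 * σ))
          rw [norm_sub_rev] at h1
          have h2 := le_add_rpow_mul_rpow (q := q) (by linarith) (norm_nonneg (f (a + 1 * σ))) hμ0
          linarith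
      _ = ENNReal.ofReal μ + ENNReal.ofReal (μ ^ (1 - q)) *
          (∫⁻ σ in Ioc (0 : ℝ) 1, ENNReal.ofReal (‖f (a + 1 * σ)‖ ^ q)) +
          ∫⁻ σ in Ioc (0 : ℝ) 1, ENNReal.ofReal ‖f (a + 1 * σ) - f a‖ := by
          have m1 : Measurable fun σ => ENNReal.ofReal (‖f (a + 1 * σ)‖ ^ q) :=
            (hcq.comp (by fun_prop : Continuous fun σ => a + 1 * σ)).measurable.ennreal_ofReal
          have m2 : Measurable fun σ => ENNReal.ofReal μ + ENNReal.ofReal (μ ^ (1 - q)) *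
              ENNReal.ofReal (‖f (a + 1 * σ)‖ ^ q) := measurable_const.add (m1.const_mul _)
          rw [lintegral_add_left m2,
            lintegral_add_left measurable_const, lintegral_const_mul _ m1]
          simp
      _ ≤ ENNReal.ofReal μ + ENNReal.ofReal (μ ^ (1 - q)) * ENNReal.ofReal (μ ^ q) +
          ENNReal.ofReal (morreyConst q * (2 * μ) * |1| ^ (1 - 2 / q)) := by gcongr
      _ = _ := by
          rw [← ENNReal.ofReal_mul (by positivity), ← ENNReal.ofReal_add hμ0.le (by positivity),
            ← ENNReal.ofReal_add (by positivity) (by positivity), ← Real.rpow_add hμ0,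
            abs_one, Real.one_rpow, sub_add_cancel, Real.rpow_one]
          congr 1; ring
  exact (ENNReal.ofReal_le_ofReal_iff (by positivity)).1 key

end WnormBounds

section TangentPointRatio

variable {n : ℕ} {q L κ ω h : ℝ} {a b c d : EuclideanSpace ℝ (Fin n)}

/-- The tangent-point integrand as a function of the tangent `a` and the chord `b`. -/
def tpRatio (q : ℝ) (a b : EuclideanSpace ℝ (Fin n)) : ℝ :=
  wedgeSq a b ^ (q / 2) / ‖b‖ ^ (2 * q)

/-- The derivative of `tpRatio` at `(a, b)` in direction `(c, d)`. -/
def tpRatioDeriv (q : ℝ) (a b c d : EuclideanSpace ℝ (Fin n)) : ℝ :=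
  q * wedgeSq a b ^ (q / 2 - 1) * (wedgeInner a b c b + wedgeInner a b a d) / ‖b‖ ^ (2 * q) -
    2 * q * wedgeSq a b ^ (q / 2) * ⟪b, d⟫ / ‖b‖ ^ (2 * q + 2)

theorem tpRatio_zero_right (hq : 0 < q) : tpRatio q a 0 = 0 := by
  have : 2 * q ≠ 0 := by positivity
  simp [tpRatio, Real.zero_rpow this]

theorem tpRatioDeriv_zero_right (hq : 0 < q) : tpRatioDeriv q a 0 c d = 0 := by
  have h1 : 2 * q ≠ 0 := by positivity
  have h2 : 2 * q + 2 ≠ 0 := by positivity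
  simp [tpRatioDeriv, Real.zero_rpow h1, Real.zero_rpow h2]

theorem hasDerivAt_wedgeSq (a b c d : EuclideanSpace ℝ (Fin n)) (t : ℝ) :
    HasDerivAt (fun t : ℝ => wedgeSq (a + t • c) (b + t • d))
      (2 * (wedgeInner (a + t • c) (b + t • d) c (b + t • d) +
        wedgeInner (a + t • c) (b + t • d) (a + t • c) d)) t := by
  have ha : HasDerivAt (fun t : ℝ => a + t • c) c t := by
    simpa using ((hasDerivAt_id t).smul_const c).const_add a
  have hb : HasDerivAt (fun t : ℝ => b + t • d) d t := by
    simpa using ((hasDerivAt_id t).smul_const d).const_add b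
  have := (ha.norm_sq.mul hb.norm_sq).sub ((ha.inner ℝ hb).pow 2)
  refine this.congr_deriv ?_
  simp only [wedgeInner, real_inner_self_eq_norm_sq]
  rw [real_inner_comm c (b + t • d), real_inner_comm (a + t • c) (b + t • d)]
  ring

theorem hasDerivAt_tpRatio (hq : 2 < q) {t : ℝ} (hb : b + t • d ≠ 0) :
    HasDerivAt (fun t : ℝ => tpRatio q (a + t • c) (b + t • d))
      (tpRatioDeriv q (a + t • c) (b + t • d) c d) t := by
  have hbd : HasDerivAt (fun t : ℝ => b + t • d) d t := by
    simpa using ((hasDerivAt_id t).smul_const d).const_add b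
  have h0 : 0 < ‖b + t • d‖ := norm_pos_iff.2 hb
  have hW := (hasDerivAt_wedgeSq a b c d t).rpow_const (p := q / 2) (Or.inr (by linarith))
  have hS := hbd.norm_sq.rpow_const (p := q) (Or.inr (by linarith))
  have := hW.div hS (by positivity)
  have e : ∀ r : ℝ, 0 ≤ r → (r ^ 2) ^ q = r ^ (2 * q) := fun r hr => by
    rw [← Real.rpow_two, ← Real.rpow_mul hr]
  simp only [e _ (norm_nonneg _)] at this
  refine this.congr_deriv ?_
  have e2 : (‖b + t • d‖ ^ 2) ^ (q - 1) = ‖b + t • d‖ ^ (2 * q) / ‖b + t • d‖ ^ 2 := by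
    rw [Real.rpow_sub_one (by positivity), e _ h0.le]
  have e3 : ‖b + t • d‖ ^ (2 * q + 2) = ‖b + t • d‖ ^ (2 * q) * ‖b + t • d‖ ^ 2 := by
    rw [Real.rpow_add h0, Real.rpow_two]
  have h1 : 0 < ‖b + t • d‖ ^ (2 * q) := by positivity
  rw [tpRatioDeriv, e2, e3]
  field_simp

theorem abs_wedgeInner_le (a b c d : EuclideanSpace ℝ (Fin n)) :
    |wedgeInner a b c d| ≤ 2 * (‖a‖ * ‖b‖ * ‖c‖ * ‖d‖) := by
  unfold wedgeInner
  refine (abs_sub _ _).trans ?_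
  rw [abs_mul, abs_mul]
  have h1 : |⟪a, c⟫| * |⟪b, d⟫| ≤ (‖a‖ * ‖c‖) * (‖b‖ * ‖d‖) := by
    gcongr <;> exact abs_real_inner_le_norm _ _
  have h2 : |⟪a, d⟫| * |⟪b, c⟫| ≤ (‖a‖ * ‖d‖) * (‖b‖ * ‖c‖) := by
    gcongr <;> exact abs_real_inner_le_norm _ _
  linarith

theorem wedgeSq_smul_add (a b : EuclideanSpace ℝ (Fin n)) (h : ℝ) :
    wedgeSq a (h • a + b) = wedgeSq a b := by
  unfold wedgeSq
  rw [norm_add_sq_real, inner_add_right, inner_smul_right, inner_smul_left, norm_smul,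
    real_inner_self_eq_norm_sq, Real.norm_eq_abs, mul_pow, sq_abs]
  simp
  ring

theorem wedgeInner_smul_add (a b c d : EuclideanSpace ℝ (Fin n)) (h : ℝ) :
    wedgeInner a (h • a + b) c (h • a + b) + wedgeInner a (h • a + b) a (h • c + d) =
      wedgeInner a b c b + wedgeInner a b a d := by
  unfold wedgeInner
  simp only [inner_add_left, inner_add_right, inner_smul_left, inner_smul_right]
  simp
  rw [real_inner_comm a b, real_inner_comm c b, real_inner_comm c a]
  ring

theorem rpow_sub_one_mul_le {x y μ q : ℝ} (hx : 0 ≤ x) (hy : 0 ≤ y) (hμ : 0 < μ) (hq : 1 < q) :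
    x ^ (q - 1) * y ≤ μ * x ^ q + μ ^ (1 - q) * y ^ q := by
  have e : ∀ z : ℝ, 0 ≤ z → z ^ (q - 1) * z = z ^ q := fun z hz => by
    rw [← Real.rpow_add_one' hz (by linarith), sub_add_cancel]
  have h1 : 0 ≤ μ ^ (1 - q) * y ^ q := by positivity
  have h2 : 0 ≤ μ * x ^ q := by positivity
  rcases le_total y (μ * x) with h | h
  · calc x ^ (q - 1) * y ≤ x ^ (q - 1) * (μ * x) := by gcongr
      _ = μ * x ^ q := by rw [← e x hx]; ring
      _ ≤ _ := by linarith
  · have hxy : x ≤ y / μ := by rw [le_div_iff₀ hμ]; linarith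
    calc x ^ (q - 1) * y ≤ (y / μ) ^ (q - 1) * y := by
          have : 0 ≤ q - 1 := by linarith
          gcongr
      _ = μ ^ (1 - q) * y ^ q := by
          rw [Real.div_rpow hy hμ.le, ← e y hy, show (1 - q) = -(q - 1) by ring,
            Real.rpow_neg hμ.le]
          ring
      _ ≤ _ := by linarith

/-- The constant in the pointwise estimate of the first variation of the integrand. -/
def tpRatioConst (q L κ : ℝ) : ℝ := 2 * q / κ ^ (2 * q) * (L ^ (q - 1) + L ^ q + L ^ q / κ)

theorem tpRatioConst_pos (hq : 0 < q) (hL : 0 < L) (hκ : 0 < κ) : 0 < tpRatioConst q L κ := by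
  unfold tpRatioConst; positivity

theorem wedgeSq_rpow_le {r : ℝ} (hr : 0 ≤ r) (hL : 0 < L) (ha : ‖a‖ ≤ L) :
    wedgeSq a b ^ (r / 2) ≤ L ^ r * ‖b‖ ^ r := by
  calc wedgeSq a b ^ (r / 2) ≤ ((L * ‖b‖) ^ 2) ^ (r / 2) := by
        refine Real.rpow_le_rpow (wedgeSq_nonneg a b) ((wedgeSq_le a b).trans ?_) (by positivity)
        gcongr
    _ = L ^ r * ‖b‖ ^ r := by
        rw [← Real.rpow_two, ← Real.rpow_mul (by positivity), mul_div_cancel₀ r two_ne_zero,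
          Real.mul_rpow hL.le (norm_nonneg _)]

theorem abs_tpRatioDeriv_le (hq : 2 < q) (hL : 0 < L) (hκ : 0 < κ) (hω : 0 ≤ ω) (hh : h ≠ 0)
    (ha : ‖a‖ ≤ L) (hc : ‖c‖ ≤ ω) (hd : ‖h • c + d‖ ≤ ω * |h|) (hb : κ * |h| ≤ ‖h • a + b‖) :
    |tpRatioDeriv q a (h • a + b) c (h • c + d)| ≤
      tpRatioConst q L κ * ((ω * ‖b‖ ^ q + ‖b‖ ^ (q - 1) * ‖d‖) / |h| ^ (2 * q)) := by
  have hh0 : 0 < |h| := abs_pos.2 hh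
  have hN : 0 < ‖h • a + b‖ := lt_of_lt_of_le (by positivity) hb
  set N := ‖h • a + b‖ with hNdef
  have hpow : κ ^ (2 * q) * |h| ^ (2 * q) ≤ N ^ (2 * q) := by
    rw [← Real.mul_rpow hκ.le hh0.le]; gcongr
  have e : ∀ z : ℝ, 0 ≤ z → z ^ (q - 2) * z = z ^ (q - 1) := fun z hz => by
    rw [← Real.rpow_add_one' hz (by linarith)]; congr 1; ring
  have e' : ∀ z : ℝ, 0 ≤ z → z ^ (q - 1) * z = z ^ q := fun z hz => by
    rw [← Real.rpow_add_one' hz (by linarith), sub_add_cancel]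
  have hb0 := norm_nonneg b
  have hd0 := norm_nonneg d
  unfold tpRatioDeriv
  rw [wedgeSq_smul_add, wedgeInner_smul_add, ← hNdef]
  have hW := wedgeSq_nonneg a b
  have hinner : |wedgeInner a b c b + wedgeInner a b a d| ≤
      2 * L * ‖b‖ * (ω * ‖b‖ + L * ‖d‖) := by
    refine (abs_add_le _ _).trans ?_
    have h1 := abs_wedgeInner_le a b c b
    have h2 := abs_wedgeInner_le a b a d
    have h3 : ‖a‖ * ‖b‖ * ‖c‖ * ‖b‖ ≤ L * ‖b‖ * ω * ‖b‖ := by gcongr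
    have h4 : ‖a‖ * ‖b‖ * ‖a‖ * ‖d‖ ≤ L * ‖b‖ * L * ‖d‖ := by gcongr
    linarith
  have t1 : |q * wedgeSq a b ^ (q / 2 - 1) * (wedgeInner a b c b + wedgeInner a b a d) /
      N ^ (2 * q)| ≤ 2 * q / κ ^ (2 * q) *
        ((L ^ (q - 1) * (ω * ‖b‖ ^ q) + L ^ q * (‖b‖ ^ (q - 1) * ‖d‖)) / |h| ^ (2 * q)) := by
    have h1 : wedgeSq a b ^ (q / 2 - 1) ≤ L ^ (q - 2) * ‖b‖ ^ (q - 2) := by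
      rw [show q / 2 - 1 = (q - 2) / 2 by ring]
      exact wedgeSq_rpow_le (by linarith) hL ha
    rw [abs_div, abs_mul, abs_mul, abs_of_pos (by linarith : 0 < q),
      abs_of_nonneg (Real.rpow_nonneg hW _), abs_of_pos (by positivity : 0 < N ^ (2 * q))]
    calc _ ≤ q * (L ^ (q - 2) * ‖b‖ ^ (q - 2)) * (2 * L * ‖b‖ * (ω * ‖b‖ + L * ‖d‖)) /
          (κ ^ (2 * q) * |h| ^ (2 * q)) := by gcongr
      _ = _ := by
        rw [← e' L hL.le, ← e L hL.le, ← e' ‖b‖ hb0, ← e ‖b‖ hb0]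
        field_simp
  have t2 : |2 * q * wedgeSq a b ^ (q / 2) * ⟪h • a + b, h • c + d⟫ / N ^ (2 * q + 2)| ≤
      2 * q / κ ^ (2 * q) * ((L ^ q / κ * (ω * ‖b‖ ^ q)) / |h| ^ (2 * q)) := by
    have h1 : wedgeSq a b ^ (q / 2) ≤ L ^ q * ‖b‖ ^ q := wedgeSq_rpow_le (by linarith) hL ha
    have h2 : |⟪h • a + b, h • c + d⟫| ≤ N * (ω * |h|) :=
      (abs_real_inner_le_norm _ _).trans (by gcongr)
    have h3 : (κ ^ (2 * q) * |h| ^ (2 * q)) * (κ * |h|) * N ≤ N ^ (2 * q + 2) := by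
      calc _ ≤ N ^ (2 * q) * N * N := by gcongr
        _ = _ := by rw [Real.rpow_add hN, Real.rpow_two]; ring
    rw [abs_div, abs_mul, abs_mul, abs_of_pos (by linarith : 0 < 2 * q),
      abs_of_nonneg (Real.rpow_nonneg hW _), abs_of_pos (by positivity : 0 < N ^ (2 * q + 2))]
    calc _ ≤ 2 * q * (L ^ q * ‖b‖ ^ q) * (N * (ω * |h|)) /
          ((κ ^ (2 * q) * |h| ^ (2 * q)) * (κ * |h|) * N) := by gcongr
      _ = _ := by field_simp
  refine (abs_sub _ _).trans ((add_le_add t1 t2).trans ?_)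
  rw [← mul_add, ← add_div, tpRatioConst, mul_assoc]
  have p1 : 0 ≤ L ^ (q - 1) * (‖b‖ ^ (q - 1) * ‖d‖) := by positivity
  have p2 : 0 ≤ L ^ q * (ω * ‖b‖ ^ q) := by positivity
  have p3 : 0 ≤ L ^ q / κ * (‖b‖ ^ (q - 1) * ‖d‖) := by positivity
  refine mul_le_mul_of_nonneg_left ?_ (by positivity)
  rw [← mul_div_assoc]
  refine div_le_div_of_nonneg_right ?_ (by positivity)
  linarith

end TangentPointRatio

section FirstVariation

variable {n : ℕ} {q lam Λ M κ ω L t μ : ℝ} {u w v : ℝ → EuclideanSpace ℝ (Fin n)}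

theorem aestronglyMeasurable_tpKernel (q : ℝ) (hv : ContDiff ℝ 1 v) :
    AEStronglyMeasurable (fun p : ℝ × ℝ => tpKernel q v p.1 p.2) (volume.restrict unitSq) := by
  have hm : Measurable fun p : ℝ × ℝ => tpKernel q v p.1 p.2 := measurable_tpKernel q hv
  exact hm.aestronglyMeasurable

theorem ae_nonneg_tpKernel (q : ℝ) (v : ℝ → EuclideanSpace ℝ (Fin n)) :
    0 ≤ᵐ[volume.restrict unitSq] fun p : ℝ × ℝ => tpKernel q v p.1 p.2 :=
  Eventually.of_forall fun p => tpKernel_nonneg q v p.1 p.2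

theorem TPr_eq_integral (hq : 0 < q) (hv : ContDiff ℝ 1 v) :
    TPr q v = 1 / q * ∫ p in unitSq, tpKernel q v p.1 p.2 := by
  rw [integral_eq_lintegral_of_nonneg_ae (ae_nonneg_tpKernel q v)
    (aestronglyMeasurable_tpKernel q hv), TPr, TPe, ENNReal.toReal_mul,
    ENNReal.toReal_ofReal (by positivity)]
  simp only [tpKernel]

theorem integrable_tpKernel (hq : 0 < q) (hv : ContDiff ℝ 1 v)
    (hTP : TPe q v ≤ ENNReal.ofReal M) :
    Integrable (fun p : ℝ × ℝ => tpKernel q v p.1 p.2) (volume.restrict unitSq) := by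
  refine ⟨aestronglyMeasurable_tpKernel q hv, ?_⟩
  rw [hasFiniteIntegral_iff_ofReal (ae_nonneg_tpKernel q v)]
  exact (setLIntegral_tpKernel_le hq hTP).trans_lt ENNReal.ofReal_lt_top

theorem tpKernel_add_smul (hu : ContDiff ℝ 1 u) (hw : ContDiff ℝ 1 w) (q t x y : ℝ) :
    tpKernel q (fun x => u x + t • w x) x y =
      tpRatio q (deriv u y + t • deriv w y) (u x - u y + t • (w x - w y)) := by
  have h1 : deriv (fun x => u x + t • w x) y = deriv u y + t • deriv w y :=
    ((hu.differentiable one_ne_zero y).hasDerivAt.add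
      ((hw.differentiable one_ne_zero y).hasDerivAt.const_smul t)).deriv
  have h2 : u x + t • w x - (u y + t • w y) = u x - u y + t • (w x - w y) := by
    rw [smul_sub]; abel
  rw [tpKernel, h1, h2, tpRatio]

theorem apply_eq_apply_add_wrap (hv : Function.Periodic v 1) (x y : ℝ) :
    v x = v (y + wrap (x - y)) := by
  rw [wrap_eq_add, ← hv.int_mul ⌊1 / 2 - (x - y)⌋ x]
  congr 1; ring

theorem norm_sub_le_mul_abs_wrap (hv : ContDiff ℝ 1 v) (hper : Function.Periodic v 1)
    (hω : ∀ x, ‖deriv v x‖ ≤ ω) (x y : ℝ) : ‖v x - v y‖ ≤ ω * |wrap (x - y)| := by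
  rw [apply_eq_apply_add_wrap hper x y]
  have := convex_univ.norm_image_sub_le_of_norm_deriv_le
    (fun x _ => (hv.differentiable one_ne_zero) x) (fun x _ => hω x)
    (mem_univ y) (mem_univ (y + wrap (x - y)))
  simpa using this

/-- The integrand of the first variation of the tangent-point functional along `u + t w`. -/
def firstVariationKernel (q : ℝ) (u w : ℝ → EuclideanSpace ℝ (Fin n)) (t : ℝ) (p : ℝ × ℝ) : ℝ :=
  tpRatioDeriv q (deriv u p.2 + t • deriv w p.2) (u p.1 - u p.2 + t • (w p.1 - w p.2))
    (deriv w p.2) (w p.1 - w p.2)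

/-- The density controlling the first-order Taylor remainder of a curve. -/
def remainderKernel (q : ℝ) (v : ℝ → EuclideanSpace ℝ (Fin n)) (p : ℝ × ℝ) : ℝ :=
  ‖taylorRem v p.1 p.2‖ ^ q / |wrap (p.1 - p.2)| ^ (2 * q)

theorem remainderKernel_nonneg (q : ℝ) (v : ℝ → EuclideanSpace ℝ (Fin n)) (p : ℝ × ℝ) :
    0 ≤ remainderKernel q v p := by
  unfold remainderKernel; positivity

theorem measurable_remainderKernel (hv : ContDiff ℝ 1 v) :
    Measurable (remainderKernel q v) :=
  ((measurable_taylorRem hv).norm.pow_const q).div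
    ((continuous_abs.measurable.comp (measurable_wrap.comp (by fun_prop))).pow_const _)

theorem integrable_remainderKernel (hv : ContDiff ℝ 1 v) (hper : Function.Periodic v 1)
    (hq : 2 < q) (hfin : sobSemPow (1 - 1 / q) q (deriv v) < ⊤) :
    Integrable (remainderKernel q v) (volume.restrict unitSq) := by
  refine ⟨(measurable_remainderKernel hv).aestronglyMeasurable, ?_⟩
  rw [hasFiniteIntegral_iff_ofReal (Eventually.of_forall (remainderKernel_nonneg q v))]
  exact (lintegral_taylorRem_le hv hper hq).trans_lt hfin

theorem integral_remainderKernel_le (hv : ContDiff ℝ 1 v) (hper : Function.Periodic v 1)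
    (hq : 2 < q) (hfin : sobSemPow (1 - 1 / q) q (deriv v) < ⊤)
    (hμ : Wnorm (1 - 1 / q) q (deriv v) ≤ μ) :
    ∫ p in unitSq, remainderKernel q v p ≤ μ ^ q := by
  have hμ0 : 0 ≤ μ := (Wnorm_nonneg _ _ _).trans hμ
  rw [integral_eq_lintegral_of_nonneg_ae (Eventually.of_forall (remainderKernel_nonneg q v))
    (measurable_remainderKernel hv).aestronglyMeasurable]
  refine ENNReal.toReal_le_of_le_ofReal (by positivity) ?_
  exact (lintegral_taylorRem_le hv hper hq).trans (sobSemPow_le_of_Wnorm_le (by linarith) hfin hμ)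

theorem measurable_firstVariationKernel (hu : ContDiff ℝ 1 u) (hw : ContDiff ℝ 1 w) :
    Measurable (firstVariationKernel q u w t) := by
  have h1 := hu.continuous
  have h2 := hu.continuous_deriv le_rfl
  have h3 := hw.continuous
  have h4 := hw.continuous_deriv le_rfl
  have ha : Continuous fun p : ℝ × ℝ => deriv u p.2 + t • deriv w p.2 := by fun_prop
  have hb : Continuous fun p : ℝ × ℝ => u p.1 - u p.2 + t • (w p.1 - w p.2) := by fun_prop
  have hc : Continuous fun p : ℝ × ℝ => deriv w p.2 := by fun_prop
  have hd : Continuous fun p : ℝ × ℝ => w p.1 - w p.2 := by fun_prop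
  have hW := (continuous_wedgeSq.comp (ha.prodMk hb)).measurable
  have hI : Measurable fun p : ℝ × ℝ =>
      ⟪u p.1 - u p.2 + t • (w p.1 - w p.2), w p.1 - w p.2⟫ :=
    Continuous.measurable (by fun_prop)
  have hN := hb.norm.measurable
  have hwi : Measurable fun p : ℝ × ℝ => wedgeInner (deriv u p.2 + t • deriv w p.2)
      (u p.1 - u p.2 + t • (w p.1 - w p.2)) (deriv w p.2)
      (u p.1 - u p.2 + t • (w p.1 - w p.2)) + wedgeInner (deriv u p.2 + t • deriv w p.2)
      (u p.1 - u p.2 + t • (w p.1 - w p.2)) (deriv u p.2 + t • deriv w p.2)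
      (w p.1 - w p.2) := by
    unfold wedgeInner
    exact Continuous.measurable (by fun_prop)
  exact ((((hW.pow_const _).const_mul q).mul hwi).div (hN.pow_const _)).sub
    ((((hW.pow_const _).const_mul (2 * q)).mul hI).div (hN.pow_const _))

theorem abs_firstVariationKernel_le (hq : 2 < q) (hu : Function.Periodic u 1)
    (hw : ContDiff ℝ 1 w) (hwper : Function.Periodic w 1) (hL : 0 < L) (hκ : 0 < κ) (hω : 0 ≤ ω)
    (hwω : ∀ x, ‖deriv w x‖ ≤ ω) (hup : ∀ y, ‖deriv u y + t • deriv w y‖ ≤ L)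
    (hlow : ∀ x y, κ * |wrap (x - y)| ≤ ‖u x - u y + t • (w x - w y)‖) (p : ℝ × ℝ) :
    |firstVariationKernel q u w t p| ≤ tpRatioConst q L κ *
      ((ω * ‖taylorRem u p.1 p.2 + t • taylorRem w p.1 p.2‖ ^ q +
        ‖taylorRem u p.1 p.2 + t • taylorRem w p.1 p.2‖ ^ (q - 1) * ‖taylorRem w p.1 p.2‖) /
        |wrap (p.1 - p.2)| ^ (2 * q)) := by
  obtain ⟨x, y⟩ := p
  have hC := tpRatioConst_pos (by linarith : 0 < q) hL hκ
  simp only [firstVariationKernel]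
  rcases eq_or_ne (wrap (x - y)) 0 with h0 | h0
  · have e1 := apply_eq_apply_add_wrap hu x y
    have e2 := apply_eq_apply_add_wrap hwper x y
    rw [h0, add_zero] at e1 e2
    rw [e1, e2, sub_self, sub_self, smul_zero, add_zero, tpRatioDeriv_zero_right (by linarith),
      abs_zero]
    positivity
  · have hb : u x - u y + t • (w x - w y) = wrap (x - y) • (deriv u y + t • deriv w y) +
        (taylorRem u x y + t • taylorRem w x y) := by
      rw [sub_eq_wrap_smul_add_taylorRem u, sub_eq_wrap_smul_add_taylorRem w, smul_add, smul_add,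
        smul_comm t]
      abel
    have hl := hlow x y
    have hd := norm_sub_le_mul_abs_wrap hw hwper hwω x y
    rw [hb] at hl ⊢
    rw [sub_eq_wrap_smul_add_taylorRem w] at hd ⊢
    exact abs_tpRatioDeriv_le hq hL hκ hω h0 (hup y) (hwω y) hd hl

/-- The first variation of the tangent-point functional. -/
def tpFirstVariation (q : ℝ) (u w : ℝ → EuclideanSpace ℝ (Fin n)) : ℝ :=
  1 / q * ∫ p in unitSq, firstVariationKernel q u w 0 p

theorem abs_firstVariationKernel_le_of_abs_le (hq : 2 < q) (hu : AdmissibleCurve lam Λ u)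
    (hΛ : 0 < Λ) (hw : ContDiff ℝ 1 w) (hwper : Function.Periodic w 1) (hκ : 0 < κ)
    (hbil : ∀ x y, κ * |wrap (x - y)| ≤ ‖u x - u y‖) (hω : 0 ≤ ω)
    (hwω : ∀ x, ‖deriv w x‖ ≤ ω) (ht : |t| ≤ 1) (ht1 : |t| * ω ≤ 1) (ht2 : |t| * ω ≤ κ / 2)
    (p : ℝ × ℝ) :
    |firstVariationKernel q u w t p| ≤ tpRatioConst q (Λ + 1) (κ / 2) * ((ω + 1) * 2 ^ q + 1) *
      (remainderKernel q u p + remainderKernel q w p) := by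
  have hq0 : 0 < q := by linarith
  have hC := tpRatioConst_pos hq0 (by linarith : 0 < Λ + 1) (half_pos hκ)
  refine (abs_firstVariationKernel_le hq hu.periodic hw hwper (by linarith : 0 < Λ + 1)
    (half_pos hκ) hω hwω (fun y => ?_) (fun x y => ?_) p).trans ?_
  · refine (norm_add_le _ _).trans (add_le_add (hu.upper y) ?_)
    rw [norm_smul, Real.norm_eq_abs]
    exact (mul_le_mul_of_nonneg_left (hwω y) (abs_nonneg t)).trans ht1
  · have h1 := norm_sub_norm_le (u x - u y) (-(t • (w x - w y)))
    rw [norm_neg, sub_neg_eq_add, norm_smul, Real.norm_eq_abs] at h1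
    have h2 := norm_sub_le_mul_abs_wrap hw hwper hwω x y
    have h3 : |t| * ‖w x - w y‖ ≤ κ / 2 * |wrap (x - y)| := by
      calc _ ≤ |t| * (ω * |wrap (x - y)|) := by gcongr
        _ = (|t| * ω) * |wrap (x - y)| := by ring
        _ ≤ _ := by gcongr
    linarith [hbil x y]
  · rw [mul_assoc]
    refine mul_le_mul_of_nonneg_left ?_ hC.le
    unfold remainderKernel
    rw [← add_div, ← mul_div_assoc]
    refine div_le_div_of_nonneg_right ?_ (by positivity)
    set D := taylorRem u p.1 p.2
    set D' := taylorRem w p.1 p.2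
    have h1 := rpow_sub_one_mul_le (q := q) (norm_nonneg (D + t • D')) (norm_nonneg D') one_pos
      (by linarith)
    rw [Real.one_rpow, one_mul, one_mul] at h1
    have h2 : ‖D + t • D'‖ ^ q ≤ 2 ^ q * (‖D‖ ^ q + ‖D'‖ ^ q) := by
      refine le_trans ?_ (add_rpow_le_two_rpow_mul (norm_nonneg D) (norm_nonneg D') hq0.le)
      gcongr
      refine (norm_add_le _ _).trans (add_le_add_right ?_ _)
      rw [norm_smul, Real.norm_eq_abs]
      exact mul_le_of_le_one_left (norm_nonneg _) ht
    have h3 : (ω + 1) * ‖D + t • D'‖ ^ q ≤ (ω + 1) * (2 ^ q * (‖D‖ ^ q + ‖D'‖ ^ q)) := by gcongr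
    have h4 : 0 ≤ ‖D‖ ^ q := by positivity
    linarith

theorem hasDerivAt_TPr (hq : 2 < q) (hu : AdmissibleCurve lam Λ u) (hΛ : 0 < Λ)
    (hufin : sobSemPow (1 - 1 / q) q (deriv u) < ⊤) (hTP : TPe q u ≤ ENNReal.ofReal M)
    (hw : ContDiff ℝ 1 w) (hwper : Function.Periodic w 1)
    (hwfin : sobSemPow (1 - 1 / q) q (deriv w) < ⊤) (hκ : 0 < κ)
    (hbil : ∀ x y, κ * |wrap (x - y)| ≤ ‖u x - u y‖) (hω : 0 ≤ ω)
    (hwω : ∀ x, ‖deriv w x‖ ≤ ω) :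
    HasDerivAt (fun t : ℝ => TPr q (fun x => u x + t • w x)) (tpFirstVariation q u w) 0 := by
  have hq0 : 0 < q := by linarith
  have hcd : ∀ t : ℝ, ContDiff ℝ 1 fun x => u x + t • w x := fun t =>
    hu.contDiff.add (hw.const_smul t)
  simp only [fun t => TPr_eq_integral hq0 (hcd t)]
  refine HasDerivAt.const_mul _ ?_
  set ε := min 1 (min 1 (κ / 2) / (ω + 1)) with hε
  have hε0 : 0 < ε := by positivity
  have hεω : ε * ω ≤ min 1 (κ / 2) := by
    calc ε * ω ≤ min 1 (κ / 2) / (ω + 1) * (ω + 1) := by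
          gcongr
          · exact min_le_right _ _
          · linarith
      _ = _ := by field_simp
  have hball : ∀ t ∈ Metric.ball (0 : ℝ) ε, |t| ≤ 1 ∧ |t| * ω ≤ 1 ∧ |t| * ω ≤ κ / 2 := by
    intro t ht
    have h1 : |t| ≤ ε := by simpa using (mem_ball_zero_iff.1 ht).le
    have h2 : |t| * ω ≤ min 1 (κ / 2) := (by gcongr : |t| * ω ≤ ε * ω).trans hεω
    exact ⟨h1.trans (min_le_left _ _), h2.trans (min_le_left _ _), h2.trans (min_le_right _ _)⟩
  have hlow : ∀ t ∈ Metric.ball (0 : ℝ) ε, ∀ x y : ℝ, wrap (x - y) ≠ 0 →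
      u x - u y + t • (w x - w y) ≠ 0 := by
    intro t ht x y h0 heq
    have h1 := hbil x y
    have h2 := norm_sub_le_mul_abs_wrap hw hwper hwω x y
    have h3 : ‖u x - u y‖ = |t| * ‖w x - w y‖ := by
      rw [eq_neg_of_add_eq_zero_left heq, norm_neg, norm_smul, Real.norm_eq_abs]
    have h4 : |t| * ‖w x - w y‖ ≤ κ / 2 * |wrap (x - y)| := by
      calc _ ≤ |t| * (ω * |wrap (x - y)|) := by gcongr
        _ = (|t| * ω) * |wrap (x - y)| := by ring
        _ ≤ _ := by gcongr; exact (hball t ht).2.2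
    have h5 : 0 < κ * |wrap (x - y)| := mul_pos hκ (abs_pos.2 h0)
    linarith
  refine (hasDerivAt_integral_of_dominated_loc_of_deriv_le
    (F := fun t p => tpKernel q (fun x => u x + t • w x) p.1 p.2)
    (F' := firstVariationKernel q u w)
    (bound := fun p => tpRatioConst q (Λ + 1) (κ / 2) * ((ω + 1) * 2 ^ q + 1) *
      (remainderKernel q u p + remainderKernel q w p))
    (Metric.ball_mem_nhds (0 : ℝ) hε0) ?_ ?_ ?_ ?_ ?_ ?_).2
  · exact Eventually.of_forall fun t => aestronglyMeasurable_tpKernel q (hcd t)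
  · simp only [zero_smul, add_zero]
    exact integrable_tpKernel hq0 hu.contDiff hTP
  · exact (measurable_firstVariationKernel hu.contDiff hw).aestronglyMeasurable
  · refine Eventually.of_forall fun p t ht => ?_
    obtain ⟨h1, h2, h3⟩ := hball t ht
    exact abs_firstVariationKernel_le_of_abs_le hq hu hΛ hw hwper hκ hbil hω hwω h1 h2 h3 p
  · exact ((integrable_remainderKernel hu.contDiff hu.periodic hq hufin).add
      (integrable_remainderKernel hw hwper hq hwfin)).const_mul _
  · refine Eventually.of_forall fun p t ht => ?_
    simp only [tpKernel_add_smul hu.contDiff hw, firstVariationKernel]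
    rcases eq_or_ne (wrap (p.1 - p.2)) 0 with h0 | h0
    · have e1 := apply_eq_apply_add_wrap hu.periodic p.1 p.2
      have e2 := apply_eq_apply_add_wrap hwper p.1 p.2
      rw [h0, add_zero] at e1 e2
      simp only [e1, e2, sub_self, smul_zero, add_zero, tpRatio_zero_right hq0,
        tpRatioDeriv_zero_right hq0]
      exact hasDerivAt_const t 0
    · exact hasDerivAt_tpRatio hq (hlow t ht p.1 p.2 h0)

/-- The constant in the estimate of the first variation. -/
def firstVariationConst (q lam Λ κ : ℝ) : ℝ :=
  tpRatioConst q Λ κ / q * (3 + 2 * morreyConst q + (lam ^ q)⁻¹)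

theorem firstVariationConst_pos (hq : 2 < q) (hlam : 0 < lam) (hΛ : 0 < Λ) (hκ : 0 < κ) :
    0 < firstVariationConst q lam Λ κ := by
  have := morreyConst_pos hq
  have hq0 : 0 < q := by linarith
  have := tpRatioConst_pos hq0 hΛ hκ
  unfold firstVariationConst
  positivity

theorem abs_tpFirstVariation_le (hq : 2 < q) (hu : AdmissibleCurve lam Λ u) (hlam : 0 < lam)
    (hΛ : 0 < Λ) (hufin : sobSemPow (1 - 1 / q) q (deriv u) < ⊤)
    (hw : ContDiff ℝ 1 w) (hwper : Function.Periodic w 1)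
    (hwfin : sobSemPow (1 - 1 / q) q (deriv w) < ⊤) (hκ : 0 < κ)
    (hbil : ∀ x y, κ * |wrap (x - y)| ≤ ‖u x - u y‖) (hμ0 : 0 < μ)
    (hμ : Wnorm (1 - 1 / q) q (deriv w) ≤ μ) :
    |tpFirstVariation q u w| ≤
      firstVariationConst q lam Λ κ * Wnorm (1 - 1 / q) q (deriv u) ^ q * μ := by
  have hq0 : 0 < q := by linarith
  have hm := morreyConst_pos hq
  have hC := tpRatioConst_pos hq0 hΛ hκ
  set S := 2 + 2 * morreyConst q with hS
  set N := Wnorm (1 - 1 / q) q (deriv u) with hN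
  set C := tpRatioConst q Λ κ with hCdef
  have hlamN : lam ≤ N :=
    le_Wnorm_of_le_norm hq0 (hu.contDiff.continuous_deriv le_rfl) hlam.le hu.lower
  have hω : ∀ x, ‖deriv w x‖ ≤ S * μ := norm_le_of_Wnorm_le hq (hw.continuous_deriv le_rfl)
    (periodic_deriv hwper) hwfin hμ0 hμ
  have hRu := integrable_remainderKernel hu.contDiff hu.periodic hq hufin
  have hRw := integrable_remainderKernel hw hwper hq hwfin
  have hpt : ∀ p, ‖firstVariationKernel q u w 0 p‖ ≤
      C * ((S + 1) * μ * remainderKernel q u p + μ ^ (1 - q) * remainderKernel q w p) := by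
    intro p
    have h1 := abs_firstVariationKernel_le (t := 0) hq hu.periodic hw hwper hΛ hκ
      (by positivity : 0 ≤ S * μ) hω (by simpa using hu.upper) (by simpa using hbil) p
    refine h1.trans (mul_le_mul_of_nonneg_left ?_ hC.le)
    unfold remainderKernel
    rw [← mul_div_assoc, ← mul_div_assoc, ← add_div, zero_smul, add_zero]
    refine div_le_div_of_nonneg_right ?_ (by positivity)
    have h2 := rpow_sub_one_mul_le (q := q) (norm_nonneg (taylorRem u p.1 p.2))
      (norm_nonneg (taylorRem w p.1 p.2)) hμ0 (by linarith)
    linarith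
  have hint : |∫ p in unitSq, firstVariationKernel q u w 0 p| ≤
      C * ((S + 1) * μ * N ^ q + μ ^ (1 - q) * μ ^ q) := by
    calc _ ≤ ∫ p in unitSq, C * ((S + 1) * μ * remainderKernel q u p +
          μ ^ (1 - q) * remainderKernel q w p) :=
          norm_integral_le_of_norm_le (((hRu.const_mul _).add (hRw.const_mul _)).const_mul C)
            (Eventually.of_forall hpt)
      _ = C * ((S + 1) * μ * (∫ p in unitSq, remainderKernel q u p) +
          μ ^ (1 - q) * ∫ p in unitSq, remainderKernel q w p) := by
          rw [integral_const_mul, integral_add (hRu.const_mul _) (hRw.const_mul _),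
            integral_const_mul, integral_const_mul]
      _ ≤ _ := by
          gcongr
          · exact integral_remainderKernel_le hu.contDiff hu.periodic hq hufin le_rfl
          · exact integral_remainderKernel_le hw hwper hq hwfin hμ
  have hμq : μ ^ (1 - q) * μ ^ q = μ := by
    rw [← Real.rpow_add hμ0, sub_add_cancel, Real.rpow_one]
  have hone : 1 ≤ (lam ^ q)⁻¹ * N ^ q := by
    rw [← div_eq_inv_mul, one_le_div (by positivity)]
    gcongr
  rw [tpFirstVariation, abs_mul, abs_of_pos (by positivity : 0 < 1 / q)]
  calc _ ≤ 1 / q * (C * ((S + 1) * μ * N ^ q + μ ^ (1 - q) * μ ^ q)) := by gcongr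
    _ = C / q * μ * ((S + 1) * N ^ q + 1) := by rw [hμq]; ring
    _ ≤ C / q * μ * ((S + 1) * N ^ q + (lam ^ q)⁻¹ * N ^ q) := by gcongr
    _ = _ := by rw [firstVariationConst, hS]; ring

end FirstVariation

/-- Lemma 2.1, first estimate: there is `c₁ = c₁(lam, Λ, M, n, q)`
such that every embedded regular curve `u` with `lam ≤ |u'| ≤ Λ` and `TP(u) ≤ M`
satisfies `|δTP(u)[w]| ≤ c₁ ‖u'‖_{W^{1-1/q,q}}^q ‖w'‖_{W^{1-1/q,q}}`, where
`δTP(u)[w] = (d/dt) TP(u + t w)|_{t=0}`. -/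
theorem first_variation_uniform_estimate (n : ℕ) (q lam Λ M : ℝ) (hq : 2 < q)
    (hlam : 0 < lam) (hΛ : lam ≤ Λ) (hM : 0 < M) :
    ∃ c₁ : ℝ, 0 < c₁ ∧ ∀ u w : ℝ → EuclideanSpace ℝ (Fin n),
      ContDiff ℝ 1 u → Function.Periodic u 1 → Embedded u →
      sobSemPow (1 - 1 / q) q (deriv u) < ⊤ →
      (∀ x, lam ≤ ‖deriv u x‖) → (∀ x, ‖deriv u x‖ ≤ Λ) →
      TPe q u ≤ ENNReal.ofReal M →
      ContDiff ℝ 1 w → Function.Periodic w 1 →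
      sobSemPow (1 - 1 / q) q (deriv w) < ⊤ →
      ∃ d : ℝ, HasDerivAt (fun t : ℝ => TPr q (fun x => u x + t • w x)) d 0 ∧
        |d| ≤ c₁ * Wnorm (1 - 1 / q) q (deriv u) ^ q * Wnorm (1 - 1 / q) q (deriv w) := by
  have hΛ0 : 0 < Λ := hlam.trans_le hΛ
  have hq0 : 0 < q := by linarith
  obtain ⟨κ, hκ, hbil⟩ := exists_bilipschitz n hq hlam hΛ hM
  have hc := firstVariationConst_pos hq hlam hΛ0 hκ
  refine ⟨firstVariationConst q lam Λ κ, hc, ?_⟩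
  intro u w hucd huper huemb hufin hulow huup hTP hw hwper hwfin
  have hu : AdmissibleCurve lam Λ u := ⟨hucd, huper, huemb, hulow, huup⟩
  have hS : 0 ≤ 2 + 2 * morreyConst q := by have := morreyConst_pos hq; positivity
  have hW := Wnorm_nonneg (1 - 1 / q) q (deriv w)
  set W := Wnorm (1 - 1 / q) q (deriv w) with hWdef
  set N := Wnorm (1 - 1 / q) q (deriv u)
  have hN : 0 < N :=
    hlam.trans_le (le_Wnorm_of_le_norm hq0 (hucd.continuous_deriv le_rfl) hlam.le hulow)
  refine ⟨tpFirstVariation q u w, ?_, ?_⟩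
  · refine hasDerivAt_TPr hq hu hΛ0 hufin hTP hw hwper hwfin hκ (hbil u hu hTP)
      (ω := (2 + 2 * morreyConst q) * (W + 1)) (by positivity) ?_
    exact norm_le_of_Wnorm_le hq (hw.continuous_deriv le_rfl) (periodic_deriv hwper) hwfin
      (by linarith) (by linarith)
  · refine le_of_forall_pos_le_add fun ε hε => ?_
    have hA : 0 < firstVariationConst q lam Λ κ * N ^ q := by positivity
    set A := firstVariationConst q lam Λ κ * N ^ q
    have hε' : 0 < ε / A := by positivity
    calc _ ≤ A * (W + ε / A) := abs_tpFirstVariation_le hq hu hlam hΛ0 hufin hw hwper hwfin hκ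
          (hbil u hu hTP) (by linarith) (by linarith)
      _ = _ := by field_simp
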